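/- Let α, β > 0 be real with κ := 1 + β − α > 0, and let a, b ∈ ℂ be such that αn + a is not a nonpositive integer for every natural number n. Set h := α^α β^{−β}, ϑ := a − b, A := κ^{−ϑ−1/2} α^{a−1/2} β^{1/2−b}, Z(x) := κ (h x)^{1/κ}, and c₁ := (1/(12αβ)) · { α(α−1)(1−6b+6b²) + β(β+1)(1−6a+6a²) + αβ[α − β − 2(1 + 6ab − 6b)] }. Then as x → +∞ along the positive real axis, ₁Ψ₁((α,a); (β,b) | x) = A · Z(x)^ϑ · e^{Z(x)} · ( 1 + c₁ / Z(x) + O(Z(x)^{−2}) ). -/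

import Mathlib

open Complex Filter Asymptotics

/-- The Wright function `₁Ψ₁((α,a); (β,b) | z) = ∑ Γ(αn+a)/Γ(βn+b) · zⁿ/n!`. -/
noncomputable def wright (α β : ℝ) (a b z : ℂ) : ℂ :=
  ∑' n : ℕ, (Complex.Gamma ((α : ℂ) * n + a) / Complex.Gamma ((β : ℂ) * n + b)) *
    z ^ n / n.factorial

/-!
By Stirling's formula with its first correction, the `n`-th coefficient of `₁Ψ₁` is a constant times
`wⁿ (1 + d / n + O(n⁻²)) / Γ(κn + c)`, where `c = 1 - ϑ` and `w = h κ ^ κ`. Since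
`1 / Γ(κn + c + 1) = 1 / ((κn + c) Γ(κn + c))`, the series is, up to that constant, the combination
`E_{κ,c}(wx) + κ d E_{κ,c+1}(wx)` of Mittag-Leffler functions and a remainder dominated by the
positive series `E_{κ,Re c + 2}(wx)`. Finally `E_{κ,c}(y ^ κ)` is `y ^ (1 - c)` times the inverse
Laplace transform of `s ^ (-c) / (1 - s ^ (-κ))`, and moving the contour past the simple pole at
`s = 1` leaves the residue `e ^ y / κ` and an error that is exponentially smaller than `e ^ y`. With
`y = Z(x)`, so that `y ^ κ = wx`, this is the stated expansion with `c₁ = κ d`.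
-/

section GammaAsymptotics

open scoped Topology

/-! ### Two-term expansions -/

/-- `f x = 1 + p / x + O(x⁻²)` as `x → +∞`: a normalised asymptotic expansion in powers of `1 / x`,
truncated after its first correction. -/
def HasTwoTermExpansion (f : ℝ → ℂ) (p : ℂ) : Prop :=
  (fun x : ℝ => f x - (1 + p / x)) =O[atTop] fun x : ℝ => (x ^ 2)⁻¹

theorem tendsto_inv_ofReal_atTop : Tendsto (fun x : ℝ => (x : ℂ)⁻¹) atTop (𝓝 0) := by
  simpa [Function.comp_def] using
    (continuous_ofReal.tendsto 0).comp (tendsto_inv_atTop_zero (𝕜 := ℝ))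

theorem isBigO_const_div_ofReal_sq (p : ℂ) :
    (fun x : ℝ => p / (x : ℂ) ^ 2) =O[atTop] fun x : ℝ => (x ^ 2)⁻¹ :=
  .of_bound ‖p‖ (.of_forall fun x => by simp [div_eq_mul_inv])

namespace HasTwoTermExpansion

variable {f g : ℝ → ℂ} {p q : ℂ}

protected theorem congr' (hf : HasTwoTermExpansion f p) (hfg : f =ᶠ[atTop] g) :
    HasTwoTermExpansion g p :=
  IsBigO.congr' hf (hfg.mono fun x hx => by simp only [hx]) .rfl

theorem one_add_div (p : ℂ) : HasTwoTermExpansion (fun x => 1 + p / x) p :=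
  (isBigO_zero _ _).congr_left fun x => by simp

theorem tendsto_one (hf : HasTwoTermExpansion f p) : Tendsto f atTop (𝓝 1) := by
  have remainder : Tendsto (fun x : ℝ => f x - (1 + p / x)) atTop (𝓝 0) :=
    IsBigO.trans_tendsto hf (tendsto_inv_atTop_zero.comp (tendsto_pow_atTop two_ne_zero))
  simpa [div_eq_mul_inv] using remainder.add ((tendsto_inv_ofReal_atTop.const_mul p).const_add 1)

theorem isBigO_one (hf : HasTwoTermExpansion f p) : f =O[atTop] fun _ : ℝ => (1 : ℝ) :=
  hf.tendsto_one.isBigO_one ℝ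

theorem eventually_ne_zero (hf : HasTwoTermExpansion f p) : ∀ᶠ x in atTop, f x ≠ 0 :=
  hf.tendsto_one.eventually_ne one_ne_zero

theorem sub_isBigO (hf : HasTwoTermExpansion f p) (hg : HasTwoTermExpansion g p) :
    (fun x => f x - g x) =O[atTop] fun x : ℝ => (x ^ 2)⁻¹ :=
  (IsBigO.sub hf hg).congr_left fun x => by ring

protected theorem mul (hf : HasTwoTermExpansion f p) (hg : HasTwoTermExpansion g q) :
    HasTwoTermExpansion (fun x => f x * g x) (p + q) := by
  have left : (fun x : ℝ => (f x - (1 + p / x)) * g x) =O[atTop] fun x : ℝ => (x ^ 2)⁻¹ := by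
    simpa using IsBigO.mul hf hg.isBigO_one
  have right : (fun x : ℝ => (1 + p / x) * (g x - (1 + q / x)))
      =O[atTop] fun x : ℝ => (x ^ 2)⁻¹ := by
    simpa using IsBigO.mul (one_add_div p).isBigO_one hg
  refine ((left.add right).add (isBigO_const_div_ofReal_sq (p * q))).congr_left fun x => ?_
  ring

protected theorem inv (hf : HasTwoTermExpansion f p) :
    HasTwoTermExpansion (fun x => (f x)⁻¹) (-p) := by
  have inv_isBigO_one : (fun x => (f x)⁻¹) =O[atTop] fun _ : ℝ => (1 : ℝ) :=
    (hf.tendsto_one.inv₀ one_ne_zero).isBigO_one ℝ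
  have product : HasTwoTermExpansion (fun x => (1 + -p / x) * f x) (-p + p) :=
    (one_add_div (-p)).mul hf
  have quotient : (fun x : ℝ => (f x)⁻¹ * ((1 + -p / x) * f x - (1 + (-p + p) / x)))
      =O[atTop] fun x : ℝ => (x ^ 2)⁻¹ := by
    simpa using inv_isBigO_one.mul product
  refine quotient.neg_left.congr' ?_ .rfl
  filter_upwards [hf.eventually_ne_zero] with x hx
  field_simp
  ring

theorem comp_const_mul (hf : HasTwoTermExpansion f p) {r : ℝ} (hr : 0 < r) :
    HasTwoTermExpansion (fun x => f (r * x)) (p / r) := by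
  have rescaled : (fun x : ℝ => ((r * x) ^ 2)⁻¹) =O[atTop] fun x : ℝ => (x ^ 2)⁻¹ :=
    .of_bound (r ^ 2)⁻¹ (.of_forall fun x => by simp [mul_pow, mul_comm])
  refine ((IsBigO.comp_tendsto hf (tendsto_id.const_mul_atTop hr)).trans rescaled).congr_left
    fun x => ?_
  simp [div_div]

theorem exp_div (p : ℂ) : HasTwoTermExpansion (fun x => cexp (p / x)) p := by
  have small : Tendsto (fun x : ℝ => p / (x : ℂ)) atTop (𝓝 0) := by
    simpa [div_eq_mul_inv] using tendsto_inv_ofReal_atTop.const_mul p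
  refine .of_bound (‖p‖ ^ 2) ?_
  filter_upwards [small.norm.eventually (ge_mem_nhds (by simp : ‖(0 : ℂ)‖ < 1))] with x hx
  have := norm_exp_sub_one_sub_id_le hx
  rw [← sub_sub]
  simpa [div_eq_mul_inv, mul_pow] using this

theorem one_add_div_linear {r : ℝ} (hr : r ≠ 0) (c d : ℂ) :
    HasTwoTermExpansion (fun x => 1 + r * d / (r * x + c)) d := by
  have hr' : (r : ℂ) ≠ 0 := ofReal_ne_zero.2 hr
  have quotient : HasTwoTermExpansion (fun x => (1 + (c / r + d) / x) * (1 + c / r / x)⁻¹) d := by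
    convert (one_add_div (c / r + d)).mul (one_add_div (c / r)).inv using 1
    ring
  refine quotient.congr' ?_
  filter_upwards [eventually_ne_atTop 0, (one_add_div (c / r)).eventually_ne_zero] with x hx hne
  have hx' : (x : ℂ) ≠ 0 := ofReal_ne_zero.2 hx
  have denominator : (1 + c / r / x) * (r * x) = r * x + c := by field_simp
  have denominator_ne : (r : ℂ) * x + c ≠ 0 :=
    denominator ▸ mul_ne_zero hne (mul_ne_zero hr' hx')
  field_simp
  ring

end HasTwoTermExpansion

/-! ### Stirling's formula with the first correction -/

/-- `Γ(x + a)` divided by the leading Stirling approximation `√(2π) x ^ (x + a - 1/2) e ^ (-x)`. -/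
noncomputable def scaledGamma (a : ℂ) (x : ℝ) : ℂ :=
  Gamma (x + a) * cexp (x - (x + a - 1 / 2) * (Real.log x : ℝ)) / (√(2 * Real.pi) : ℝ)

/-- The coefficient `B₂(a) / 2` of `1 / x` in the Stirling series of `Γ(x + a)`. -/
noncomputable def stirlingCoeff (a : ℂ) : ℂ := (6 * a ^ 2 - 6 * a + 1) / 12

/-- The logarithm of the ratio of the values of `scaledGamma a x * exp (-stirlingCoeff a / x)` at
`x + 1` and `x`. -/
noncomputable def stirlingIncrement (a : ℂ) (x : ℝ) : ℂ :=
  log (1 + a / x) + 1 - (x + a + 1 / 2) * log (1 + 1 / x)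
    + stirlingCoeff a * (1 / x - 1 / (x + 1))

theorem ofReal_sqrt_two_pi_ne_zero : ((√(2 * Real.pi) : ℝ) : ℂ) ≠ 0 :=
  ofReal_ne_zero.2 (by positivity)

theorem eventually_zero_lt_re_ofReal_add (a : ℂ) : ∀ᶠ x : ℝ in atTop, 0 < ((x : ℂ) + a).re := by
  filter_upwards [eventually_gt_atTop (-a.re)] with x hx
  rw [add_re, ofReal_re]
  linarith

theorem scaledGamma_mul_exp_add_one (a : ℂ) {x : ℝ} (hx : 0 < x) (hxa : (x : ℂ) + a ≠ 0) :
    scaledGamma a (x + 1) * cexp (-stirlingCoeff a / (x + 1 : ℝ)) =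
      scaledGamma a x * cexp (-stirlingCoeff a / x) * cexp (stirlingIncrement a x) := by
  have hx₀ : (x : ℂ) ≠ 0 := ofReal_ne_zero.2 hx.ne'
  have hx₁ : (x : ℂ) + 1 ≠ 0 := by exact_mod_cast (by positivity : x + 1 ≠ 0)
  have gamma_step : Gamma ((x + 1 : ℝ) + a) = (x + a) * Gamma (x + a) := by
    rw [← Gamma_add_one _ hxa]
    push_cast
    ring_nf
  have log_step : log (1 + 1 / x) = (Real.log (x + 1) : ℝ) - (Real.log x : ℝ) := by
    rw [← ofReal_sub, ← Real.log_div (by positivity) hx.ne', ofReal_log (by positivity)]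
    push_cast
    field_simp
  have exp_log_one_add : cexp (log (1 + a / x)) = (x + a) * cexp (-(Real.log x : ℝ)) := by
    have : 1 + a / x = (x + a) / x := by field_simp
    rw [this, exp_log (div_ne_zero hxa hx₀), Complex.exp_neg, ← ofReal_exp, Real.exp_log hx,
      div_eq_mul_inv]
  have increment : cexp (stirlingIncrement a x) = (x + a) * cexp (-(Real.log x : ℝ)) *
      cexp (1 - (x + a + 1 / 2) * ((Real.log (x + 1) : ℝ) - (Real.log x : ℝ))
        + stirlingCoeff a * (1 / x - 1 / (x + 1))) := by
    rw [stirlingIncrement, log_step, add_sub_assoc, add_assoc, Complex.exp_add, exp_log_one_add]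
  have exponents :
      cexp ((x + 1 : ℝ) - ((x + 1 : ℝ) + a - 1 / 2) * (Real.log (x + 1) : ℝ)) *
        cexp (-stirlingCoeff a / (x + 1 : ℝ)) =
      cexp (x - (x + a - 1 / 2) * (Real.log x : ℝ)) * cexp (-stirlingCoeff a / x) *
        (cexp (-(Real.log x : ℝ)) *
          cexp (1 - (x + a + 1 / 2) * ((Real.log (x + 1) : ℝ) - (Real.log x : ℝ))
            + stirlingCoeff a * (1 / x - 1 / (x + 1)))) := by
    simp only [← Complex.exp_add]
    congr 1
    push_cast
    field_simp
    ring
  rw [increment, scaledGamma, scaledGamma, gamma_step]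
  linear_combination (x + a) * Gamma (x + a) / (√(2 * Real.pi) : ℝ) * exponents

theorem isBigO_log_one_add_div_sub_logTaylor (c : ℂ) (n : ℕ) :
    (fun x : ℝ => log (1 + c / x) - logTaylor (n + 1) (c / x))
      =O[atTop] fun x : ℝ => (x ^ (n + 1))⁻¹ := by
  have small : Tendsto (fun x : ℝ => c / (x : ℂ)) atTop (𝓝 0) := by
    simpa [div_eq_mul_inv] using tendsto_inv_ofReal_atTop.const_mul c
  refine ((log_sub_logTaylor_isBigO n).comp_tendsto small).trans ?_
  exact .of_bound (‖c‖ ^ (n + 1)) (.of_forall fun x => by simp [mul_pow, div_eq_mul_inv])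

theorem stirlingIncrement_isBigO (a : ℂ) :
    stirlingIncrement a =O[atTop] fun x : ℝ => (x ^ 3)⁻¹ := by
  have log_a := isBigO_log_one_add_div_sub_logTaylor a 2
  have linear : (fun x : ℝ => (x : ℂ) + (a + 1 / 2)) =O[atTop] fun x : ℝ => x :=
    (IsBigO.of_bound 1 (.of_forall fun x => by simp)).add
      (isLittleO_const_id_atTop (a + 1 / 2)).isBigO
  have log_one : (fun x : ℝ => ((x : ℂ) + (a + 1 / 2)) *
      (log (1 + 1 / x) - logTaylor 4 (1 / x))) =O[atTop] fun x : ℝ => (x ^ 3)⁻¹ := by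
    refine (linear.mul (isBigO_log_one_add_div_sub_logTaylor 1 3)).congr' .rfl ?_
    filter_upwards [eventually_ne_atTop 0] with x hx
    field_simp
  have cubic : (fun x : ℝ => ((a + 1 / 2) / 3) * ((x ^ 3)⁻¹ : ℝ))
      =O[atTop] fun x : ℝ => (x ^ 3)⁻¹ :=
    .of_bound ‖(a + 1 / 2) / 3‖ (.of_forall fun x => by rw [norm_mul, norm_real])
  have correction : (fun x : ℝ => stirlingCoeff a * ((x ^ 2 * (x + 1))⁻¹ : ℝ))
      =O[atTop] fun x : ℝ => (x ^ 3)⁻¹ := by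
    refine .of_bound ‖stirlingCoeff a‖ ?_
    filter_upwards [eventually_gt_atTop 0] with x hx
    rw [norm_mul, norm_real, Real.norm_of_nonneg (by positivity),
      Real.norm_of_nonneg (by positivity), pow_succ x 2]
    gcongr
    linarith
  refine (((log_a.sub log_one).sub cubic).sub correction).congr' ?_ .rfl
  filter_upwards [eventually_gt_atTop 0] with x hx
  have hx₀ : (x : ℂ) ≠ 0 := ofReal_ne_zero.2 hx.ne'
  have hx₁ : (x : ℂ) + 1 ≠ 0 := by exact_mod_cast (by positivity : x + 1 ≠ 0)
  simp only [stirlingIncrement, logTaylor, Finset.sum_range_succ, Finset.sum_range_zero,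
    stirlingCoeff]
  push_cast
  field_simp
  ring

theorem ascPochhammer_eval_eq_prod_range (s : ℂ) (n : ℕ) :
    (ascPochhammer ℂ n).eval s = ∏ j ∈ Finset.range n, (s + j) := by
  induction n with
  | zero => simp
  | succ n ih => rw [ascPochhammer_succ_eval, ih, Finset.prod_range_succ]

theorem Gamma_add_natCast_succ_div_tendsto_one {s : ℂ} (hs : ∀ m : ℕ, s ≠ -m) :
    Tendsto (fun n : ℕ => Gamma (s + n + 1) / ((n : ℂ) ^ s * n.factorial)) atTop (𝓝 1) := by
  have hΓ : Gamma s ≠ 0 := Gamma_ne_zero hs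
  have quotient : Tendsto (fun n => Gamma s / GammaSeq s n) atTop (𝓝 1) := by
    have := (tendsto_const_nhds (x := Gamma s)).div (GammaSeq_tendsto_Gamma s) hΓ
    rwa [div_self hΓ] at this
  refine quotient.congr fun n => ?_
  have product : Gamma (s + n + 1) = (∏ j ∈ Finset.range (n + 1), (s + j)) * Gamma s := by
    rw [← ascPochhammer_eval_eq_prod_range, ← Gamma_add_nat_div_Gamma_eq s hs,
      div_mul_cancel₀ _ hΓ, Nat.cast_succ, add_assoc]
  rw [product, GammaSeq, div_div_eq_mul_div, mul_comm]

theorem scaledGamma_one_natCast {n : ℕ} (hn : n ≠ 0) :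
    scaledGamma 1 n = (Stirling.stirlingSeq n / √Real.pi : ℝ) := by
  have hn₀ : (0 : ℝ) < n := by positivity
  have power : ((n : ℝ) / Real.exp 1) ^ n = Real.exp (n * Real.log n - n) := by
    rw [div_pow, Real.exp_sub, Real.exp_nat_mul, Real.exp_log hn₀, ← Real.exp_nat_mul, mul_one]
  have root : √(2 * n) * √Real.pi = √(2 * Real.pi) * Real.exp (Real.log n / 2) := by
    rw [← Real.log_sqrt hn₀.le, Real.exp_log (by positivity), ← Real.sqrt_mul (by positivity),
      ← Real.sqrt_mul (by positivity)]
    ring_nf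
  have real_form : Stirling.stirlingSeq n / √Real.pi =
      n.factorial * Real.exp (n - (n + 1 - 1 / 2) * Real.log n) / √(2 * Real.pi) := by
    rw [Stirling.stirlingSeq, power, div_div, mul_right_comm, root, mul_assoc, ← Real.exp_add,
      mul_comm (√_), ← div_div, div_eq_mul_inv (_ : ℝ) (Real.exp _), ← Real.exp_neg]
    ring_nf
  rw [real_form, scaledGamma, ofReal_natCast, Gamma_nat_eq_factorial]
  push_cast
  rfl

theorem scaledGamma_one_natCast_tendsto_one :
    Tendsto (fun n : ℕ => scaledGamma 1 n) atTop (𝓝 1) := by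
  have stirling : Tendsto (fun n => Stirling.stirlingSeq n / √Real.pi) atTop (𝓝 1) := by
    simpa only [div_self (Real.sqrt_pos.2 Real.pi_pos).ne'] using
      Stirling.tendsto_stirlingSeq_sqrt_pi.div_const (√Real.pi)
  refine ((continuous_ofReal.tendsto _).comp stirling).congr' ?_
  filter_upwards [eventually_ne_atTop 0] with n hn
  exact (scaledGamma_one_natCast hn).symm

theorem exp_stirling_shift_tendsto_one (y : ℝ) (c : ℂ) :
    Tendsto (fun n : ℕ => cexp (y - ((n * Real.log (1 + y / n) : ℝ) : ℂ)
      - c * (Real.log (1 + y / n) : ℝ))) atTop (𝓝 1) := by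
  have mul_log : Tendsto (fun n : ℕ => n * Real.log (1 + y / n)) atTop (𝓝 y) :=
    (Real.tendsto_mul_log_one_add_div_atTop y).comp tendsto_natCast_atTop_atTop
  have log_tendsto : Tendsto (fun n : ℕ => Real.log (1 + y / n)) atTop (𝓝 0) := by
    simpa using ((tendsto_const_div_atTop_nhds_zero_nat y).const_add 1).log (by simp)
  have exponent := (((continuous_ofReal.tendsto _).comp mul_log).const_sub (y : ℂ)).sub
    (((continuous_ofReal.tendsto _).comp log_tendsto).const_mul c)
  simpa [Function.comp_def] using (continuous_exp.tendsto _).comp exponent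

theorem scaledGamma_add_natCast_succ (a : ℂ) {x : ℝ} (hx : 0 < x) {n : ℕ} (hn : n ≠ 0) :
    scaledGamma a (x + (n + 1 : ℕ)) =
      Gamma (x + a + n + 1) / ((n : ℂ) ^ (x + a) * n.factorial) * scaledGamma 1 n *
        cexp ((x + 1 : ℝ) - ((n * Real.log (1 + (x + 1) / n) : ℝ) : ℂ)
          - (x + a + 1 / 2) * (Real.log (1 + (x + 1) / n) : ℝ)) := by
  have hn₀ : (0 : ℝ) < n := by positivity
  have log_shift : Real.log (1 + (x + 1) / n) = Real.log (x + (n + 1 : ℕ)) - Real.log n := by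
    rw [← Real.log_div (by positivity) hn₀.ne']
    push_cast
    field_simp
    ring_nf
  have cpow_eq : (n : ℂ) ^ (x + a) = cexp ((x + a) * (Real.log n : ℝ)) := by
    rw [cpow_def_of_ne_zero (by exact_mod_cast hn), ← natCast_log, mul_comm]
  have gamma_arg : (((x + (n + 1 : ℕ) : ℝ) : ℂ) + a) = x + a + n + 1 := by
    push_cast
    ring
  have factorial_ne : (n.factorial : ℂ) ≠ 0 := by exact_mod_cast n.factorial_ne_zero
  rw [scaledGamma, scaledGamma, gamma_arg, cpow_eq, ofReal_natCast, Gamma_nat_eq_factorial,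
    log_shift]
  field_simp [ofReal_sqrt_two_pi_ne_zero]
  simp only [mul_assoc, ← Complex.exp_add]
  congr 2
  push_cast
  ring

theorem scaledGamma_add_natCast_tendsto_one (a : ℂ) {x : ℝ} (hx : 0 < x)
    (hxa : ∀ m : ℕ, (x : ℂ) + a ≠ -m) :
    Tendsto (fun n : ℕ => scaledGamma a (x + n)) atTop (𝓝 1) := by
  rw [← tendsto_add_atTop_iff_nat 1]
  have limit := ((Gamma_add_natCast_succ_div_tendsto_one hxa).mul
    scaledGamma_one_natCast_tendsto_one).mul
      (exp_stirling_shift_tendsto_one (x + 1) (x + a + 1 / 2))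
  simp only [mul_one] at limit
  refine limit.congr' ?_
  filter_upwards [eventually_ne_atTop 0] with n hn
  exact (scaledGamma_add_natCast_succ a hx hn).symm

theorem sum_inv_cube_le {x : ℝ} (hx : 1 ≤ x) (n : ℕ) :
    ∑ k ∈ Finset.range n, ((x + k) ^ 3)⁻¹ ≤ 2 / x ^ 2 := by
  have telescoping (k : ℕ) : ((x + k) ^ 3)⁻¹ ≤ 2 / (x + k) ^ 2 - 2 / (x + (k + 1 : ℕ)) ^ 2 := by
    have hu : 1 ≤ x + k := le_add_of_le_of_nonneg hx k.cast_nonneg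
    rw [Nat.cast_succ, ← add_assoc]
    generalize x + k = u at hu
    have difference : 2 / u ^ 2 - 2 / (u + 1) ^ 2 - (u ^ 3)⁻¹ =
        (3 * u ^ 2 - 1) / (u ^ 3 * (u + 1) ^ 2) := by
      field_simp
      ring
    have : 0 ≤ (3 * u ^ 2 - 1) / (u ^ 3 * (u + 1) ^ 2) :=
      div_nonneg (by nlinarith) (by positivity)
    linarith
  calc ∑ k ∈ Finset.range n, ((x + k) ^ 3)⁻¹
      ≤ ∑ k ∈ Finset.range n, (2 / (x + k) ^ 2 - 2 / (x + (k + 1 : ℕ)) ^ 2) :=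
        Finset.sum_le_sum fun k _ => telescoping k
    _ = 2 / x ^ 2 - 2 / (x + n) ^ 2 := by
        rw [Finset.sum_range_sub' fun k : ℕ => 2 / (x + k) ^ 2, Nat.cast_zero, add_zero]
    _ ≤ 2 / x ^ 2 := sub_le_self _ (by positivity)

theorem exists_hasSum_norm_le_of_le_inv_cube {u : ℕ → ℂ} {K x : ℝ} (hx : 1 ≤ x)
    (hu : ∀ k : ℕ, ‖u k‖ ≤ K * ((x + k) ^ 3)⁻¹) : ∃ S, HasSum u S ∧ ‖S‖ ≤ K * (2 / x ^ 2) := by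
  have nonneg (k : ℕ) : 0 ≤ ((x + k) ^ 3)⁻¹ := by positivity
  have summable := (summable_of_sum_range_le nonneg (sum_inv_cube_le hx)).mul_left K
  have hK : 0 ≤ K := nonneg_of_mul_nonneg_left ((norm_nonneg _).trans (hu 0)) (by positivity)
  refine ⟨∑' k, u k, (summable.of_norm_bounded hu).hasSum, ?_⟩
  calc ‖∑' k, u k‖ ≤ ∑' k : ℕ, K * ((x + k) ^ 3)⁻¹ := tsum_of_norm_bounded summable.hasSum hu
    _ = K * ∑' k : ℕ, ((x + k) ^ 3)⁻¹ := tsum_mul_left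
    _ ≤ K * (2 / x ^ 2) := by gcongr; exact Real.tsum_le_of_sum_range_le nonneg (sum_inv_cube_le hx)

theorem sub_one_isBigO_of_add_one_eq_mul_exp {V E : ℝ → ℂ}
    (hstep : ∀ᶠ x in atTop, V (x + 1) = V x * cexp (E x))
    (hlim : ∀ᶠ x in atTop, Tendsto (fun n : ℕ => V (x + n)) atTop (𝓝 1))
    (hE : E =O[atTop] fun x : ℝ => (x ^ 3)⁻¹) :
    (fun x => V x - 1) =O[atTop] fun x : ℝ => (x ^ 2)⁻¹ := by
  obtain ⟨K, hK⟩ := hE.bound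
  obtain ⟨X, hX⟩ := (hstep.and hK).exists_forall_of_atTop
  have small : ∀ᶠ x : ℝ in atTop, K * (2 / x ^ 2) ≤ 1 :=
    ((tendsto_const_nhds.div_atTop (tendsto_pow_atTop two_ne_zero)).const_mul K).eventually_le_const
      (by simp)
  refine .of_bound (4 * K) ?_
  filter_upwards [eventually_ge_atTop X, eventually_ge_atTop 1, hlim, small]
    with x hxX hx₁ hxlim hxsmall
  have hxk (k : ℕ) : X ≤ x + k := le_add_of_le_of_nonneg hxX k.cast_nonneg
  obtain ⟨S, hS, hSle⟩ := exists_hasSum_norm_le_of_le_inv_cube (K := K) (u := fun k => E (x + k))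
    hx₁ fun k => by
      simpa [abs_of_nonneg (by positivity : (0 : ℝ) ≤ x + k)] using (hX _ (hxk k)).2
  have product (n : ℕ) : V (x + n) = V x * cexp (∑ k ∈ Finset.range n, E (x + k)) := by
    induction n with
    | zero => simp
    | succ n ih =>
      rw [Finset.sum_range_succ, Complex.exp_add, ← mul_assoc, ← ih, ← (hX _ (hxk n)).1,
        Nat.cast_succ, add_assoc]
  have limit : V x * cexp S = 1 :=
    tendsto_nhds_unique ((((continuous_exp.tendsto _).comp hS.tendsto_sum_nat).const_mul _).congr
      fun n => (product n).symm) hxlim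
  have hV : V x = cexp (-S) := by rw [Complex.exp_neg]; exact eq_inv_of_mul_eq_one_left limit
  calc ‖V x - 1‖ ≤ 2 * ‖-S‖ := hV ▸ norm_exp_sub_one_le (by simpa using hSle.trans hxsmall)
    _ ≤ 2 * (K * (2 / x ^ 2)) := by rw [norm_neg]; gcongr
    _ = 4 * K * ‖(x ^ 2)⁻¹‖ := by rw [Real.norm_of_nonneg (by positivity)]; ring

theorem scaledGamma_hasTwoTermExpansion (a : ℂ) :
    HasTwoTermExpansion (scaledGamma a) (stirlingCoeff a) := by
  have exp_factor := HasTwoTermExpansion.exp_div (-stirlingCoeff a)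
  have hstep : ∀ᶠ x : ℝ in atTop, scaledGamma a (x + 1) * cexp (-stirlingCoeff a / (x + 1 : ℝ)) =
      scaledGamma a x * cexp (-stirlingCoeff a / x) * cexp (stirlingIncrement a x) := by
    filter_upwards [eventually_gt_atTop 0, eventually_zero_lt_re_ofReal_add a] with x hx hxa
    exact scaledGamma_mul_exp_add_one a hx (ne_zero_of_re_pos hxa)
  have hlim : ∀ᶠ x : ℝ in atTop, Tendsto (fun n : ℕ => scaledGamma a (x + n) *
      cexp (-stirlingCoeff a / (x + n : ℝ))) atTop (𝓝 1) := by
    filter_upwards [eventually_gt_atTop 0, eventually_zero_lt_re_ofReal_add a] with x hx hxa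
    have not_pole (m : ℕ) : (x : ℂ) + a ≠ -m := fun h => by
      rw [h, neg_re, natCast_re] at hxa
      linarith [m.cast_nonneg (α := ℝ)]
    have exp_limit := exp_factor.tendsto_one.comp
      (tendsto_atTop_add_const_left _ x tendsto_natCast_atTop_atTop)
    simpa using (scaledGamma_add_natCast_tendsto_one a hx not_pole).mul exp_limit
  have corrected : HasTwoTermExpansion
      (fun x => scaledGamma a x * cexp (-stirlingCoeff a / x)) 0 := by
    simpa [HasTwoTermExpansion] using
      sub_one_isBigO_of_add_one_eq_mul_exp hstep hlim (stirlingIncrement_isBigO a)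
  have product := corrected.mul (HasTwoTermExpansion.exp_div (stirlingCoeff a))
  rw [zero_add] at product
  refine product.congr' (.of_forall fun x => ?_)
  beta_reduce
  rw [mul_assoc, ← Complex.exp_add, neg_div, neg_add_cancel, Complex.exp_zero, mul_one]

end GammaAsymptotics

section MittagLeffler

open MeasureTheory Set
open scoped FourierTransform Topology

/-! ### Laplace transform and inverse Laplace transform of a power -/

theorem continuousOn_ofReal_cpow_Ioi (a : ℂ) : ContinuousOn (fun t : ℝ => (t : ℂ) ^ a) (Ioi 0) :=
  fun _ ht => (continuousAt_ofReal_cpow_const _ a (.inr (mem_Ioi.1 ht).ne')).continuousWithinAt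

theorem norm_cpow_mul_exp_neg_mul (a r : ℂ) {t : ℝ} (ht : 0 < t) :
    ‖(t : ℂ) ^ a * cexp (-(r * t))‖ = t ^ a.re * Real.exp (-r.re * t) := by
  rw [norm_mul, norm_cpow_eq_rpow_re_of_pos ht, norm_exp]
  simp

theorem integrableOn_rpow_mul_exp_neg_mul {p b : ℝ} (hp : -1 < p) (hb : 0 < b) :
    IntegrableOn (fun t : ℝ => t ^ p * Real.exp (-b * t)) (Ioi 0) := by
  simpa using integrableOn_rpow_mul_exp_neg_mul_rpow (p := 1) hp one_pos hb

theorem integrableOn_cpow_mul_exp_neg_mul {a r : ℂ} (ha : -1 < a.re) (hr : 0 < r.re) :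
    IntegrableOn (fun t : ℝ => (t : ℂ) ^ a * cexp (-(r * t))) (Ioi 0) := by
  refine (integrableOn_rpow_mul_exp_neg_mul ha hr).mono' ?_ ?_
  · exact ((continuousOn_ofReal_cpow_Ioi a).mul (by fun_prop)).aestronglyMeasurable
      measurableSet_Ioi
  · filter_upwards [ae_restrict_mem measurableSet_Ioi] with t ht
    rw [norm_cpow_mul_exp_neg_mul a r ht]

theorem differentiableAt_laplace_cpow {a r : ℂ} (ha : 0 < a.re) (hr : 0 < r.re) :
    DifferentiableAt ℂ (fun r : ℂ => ∫ t in Ioi (0 : ℝ), (t : ℂ) ^ (a - 1) * cexp (-(r * t)))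
      r := by
  have ha' : -1 < (a - 1).re := by simpa using ha
  have half_re_lt {z : ℂ} (hz : z ∈ Metric.ball r (r.re / 2)) : r.re / 2 ≤ z.re := by
    have := (neg_abs_le _).trans' (neg_le_neg ((abs_re_le_norm (z - r)).trans
      (mem_ball_iff_norm.1 hz).le))
    rw [sub_re] at this
    linarith
  refine (hasDerivAt_integral_of_dominated_loc_of_deriv_le (μ := volume.restrict (Ioi (0 : ℝ)))
    (F := fun (r : ℂ) (t : ℝ) => (t : ℂ) ^ (a - 1) * cexp (-(r * t)))
    (F' := fun (r : ℂ) (t : ℝ) => (t : ℂ) ^ (a - 1) * (cexp (-(r * t)) * (-t)))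
    (bound := fun t => t ^ a.re * Real.exp (-(r.re / 2) * t))
    (Metric.ball_mem_nhds r (half_pos hr)) ?_ (integrableOn_cpow_mul_exp_neg_mul ha' hr) ?_ ?_
    (integrableOn_rpow_mul_exp_neg_mul (by linarith) (half_pos hr)) ?_).2.differentiableAt
  · filter_upwards [Metric.ball_mem_nhds r (half_pos hr)] with z hz
    exact (integrableOn_cpow_mul_exp_neg_mul ha' (by linarith [half_re_lt hz])).1
  · exact ((continuousOn_ofReal_cpow_Ioi _).mul (by fun_prop)).aestronglyMeasurable
      measurableSet_Ioi
  · filter_upwards [ae_restrict_mem measurableSet_Ioi] with t (ht : 0 < t) z hz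
    have power : t ^ (a - 1).re * t = t ^ a.re := by
      rw [← Real.rpow_add_one ht.ne', sub_re, one_re, sub_add_cancel]
    rw [← mul_assoc, norm_mul, norm_cpow_mul_exp_neg_mul _ _ ht, norm_neg, norm_real,
      Real.norm_of_nonneg ht.le, mul_right_comm, power]
    gcongr
    exact half_re_lt hz
  · refine .of_forall fun t z _ => HasDerivAt.const_mul _ ?_
    simpa using ((hasDerivAt_id z).mul_const (t : ℂ)).neg.cexp

-- Mathlib's `integral_cpow_mul_exp_neg_mul_Ioi` is the case of real `r`; both sides are analytic.
theorem laplace_cpow {a r : ℂ} (ha : 0 < a.re) (hr : 0 < r.re) :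
    ∫ t in Ioi (0 : ℝ), (t : ℂ) ^ (a - 1) * cexp (-(r * t)) = r ^ (-a) * Gamma a := by
  have halfPlane_open : IsOpen {z : ℂ | 0 < z.re} := isOpen_lt continuous_const continuous_re
  have left_analytic : AnalyticOnNhd ℂ
      (fun r : ℂ => ∫ t in Ioi (0 : ℝ), (t : ℂ) ^ (a - 1) * cexp (-(r * t))) {z | 0 < z.re} :=
    DifferentiableOn.analyticOnNhd
      (fun z hz => (differentiableAt_laplace_cpow ha hz).differentiableWithinAt) halfPlane_open
  have right_analytic : AnalyticOnNhd ℂ (fun r : ℂ => r ^ (-a) * Gamma a) {z | 0 < z.re} :=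
    DifferentiableOn.analyticOnNhd
      (fun z hz => ((differentiableAt_id.cpow_const (.inl hz)).mul_const _).differentiableWithinAt)
      halfPlane_open
  have ofReal_tendsto : Tendsto ofReal (𝓝[≠] 1) (𝓝[≠] 1) :=
    continuous_ofReal.continuousWithinAt.tendsto_nhdsWithin fun r hr => by simpa using hr
  have eq_on_reals : ∀ᶠ r : ℝ in 𝓝[≠] 1,
      ∫ t in Ioi (0 : ℝ), (t : ℂ) ^ (a - 1) * cexp (-(r * t)) = (r : ℂ) ^ (-a) * Gamma a := by
    filter_upwards [nhdsWithin_le_nhds (Ioi_mem_nhds one_pos)] with r (hr : 0 < r)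
    rw [integral_cpow_mul_exp_neg_mul_Ioi ha hr, one_div, inv_cpow, cpow_neg]
    rw [arg_ofReal_of_nonneg hr.le]
    exact Real.pi_pos.ne
  exact left_analytic.eqOn_of_preconnected_of_frequently_eq right_analytic
    (convex_halfSpace_re_gt 0).isPreconnected (by simp)
    (ofReal_tendsto.frequently eq_on_reals.frequently) hr

/-- The point of the vertical line `Re s = σ` with imaginary part `2πw`. In this parametrisation
`(2πi)⁻¹ ∫ F(s) ds` over the line is `∫ F (verticalLine σ w) dw`. -/
noncomputable def verticalLine (σ w : ℝ) : ℂ := σ + (2 * Real.pi * w : ℝ) * I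

namespace verticalLine

variable {σ : ℝ}

@[simp] theorem re_eq (σ w : ℝ) : (verticalLine σ w).re = σ := by simp [verticalLine]

@[simp] theorem im_eq (σ w : ℝ) : (verticalLine σ w).im = 2 * Real.pi * w := by
  simp [verticalLine]

protected theorem continuous (σ : ℝ) : Continuous (verticalLine σ) := by
  unfold verticalLine
  fun_prop

theorem le_norm (σ w : ℝ) : σ ≤ ‖verticalLine σ w‖ := by
  simpa using re_le_norm (verticalLine σ w)

theorem ne_zero (hσ : 0 < σ) (w : ℝ) : verticalLine σ w ≠ 0 :=
  ne_zero_of_re_pos (by simpa using hσ)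

theorem norm_exp_mul_ofReal (σ w y : ℝ) : ‖cexp (verticalLine σ w * y)‖ = Real.exp (σ * y) := by
  rw [norm_exp]
  simp

theorem integrable_inv_norm_sq (hσ : σ ≠ 0) :
    Integrable fun w : ℝ => (‖verticalLine σ w‖ ^ 2)⁻¹ := by
  refine ((integrable_inv_one_add_sq.comp_mul_left' (R := 2 * Real.pi / σ)
    (by simp [hσ, Real.pi_ne_zero])).const_mul (σ ^ 2)⁻¹).congr (.of_forall fun w => ?_)
  have norm_sq : ‖verticalLine σ w‖ ^ 2 = σ ^ 2 + (2 * Real.pi * w) ^ 2 := by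
    rw [← normSq_eq_norm_sq, normSq_apply, re_eq, im_eq]
    ring
  simp only [norm_sq, ← mul_inv]
  field_simp

theorem continuous_cpow (hσ : 0 < σ) (t : ℂ) : Continuous fun w => verticalLine σ w ^ t :=
  (verticalLine.continuous σ).cpow continuous_const fun w => .inl (by simpa using hσ)

end verticalLine

theorem norm_cpow_neg_le {s : ℂ} (hs : s ≠ 0) (t : ℂ) :
    ‖s ^ (-t)‖ ≤ ‖s‖ ^ (-t.re) * Real.exp (Real.pi * |t.im|) := by
  have arg_bound : s.arg * t.im ≤ Real.pi * |t.im| :=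
    (le_abs_self _).trans (abs_mul s.arg t.im ▸ by gcongr; exact abs_arg_le_pi s)
  rw [norm_cpow_of_ne_zero hs, div_eq_mul_inv, ← Real.exp_neg, neg_re, neg_im, mul_neg, neg_neg]
  gcongr

theorem norm_cpow_neg_le_of_le_norm {s t : ℂ} {δ : ℝ} (hδ : 0 < δ) (hs : δ ≤ ‖s‖)
    (ht : 2 ≤ t.re) :
    ‖s ^ (-t)‖ ≤ δ ^ (2 - t.re) * Real.exp (Real.pi * |t.im|) * (‖s‖ ^ 2)⁻¹ := by
  have hpos : 0 < ‖s‖ := hδ.trans_le hs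
  have power : ‖s‖ ^ (-t.re) = ‖s‖ ^ (2 - t.re) * (‖s‖ ^ 2)⁻¹ := by
    rw [← Real.rpow_natCast, ← Real.rpow_neg hpos.le, ← Real.rpow_add hpos]
    congr 1
    push_cast
    ring
  calc ‖s ^ (-t)‖ ≤ ‖s‖ ^ (2 - t.re) * (‖s‖ ^ 2)⁻¹ * Real.exp (Real.pi * |t.im|) :=
        power ▸ norm_cpow_neg_le (norm_pos_iff.1 hpos) t
    _ ≤ δ ^ (2 - t.re) * (‖s‖ ^ 2)⁻¹ * Real.exp (Real.pi * |t.im|) := by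
        gcongr ?_ * _ * _
        exact Real.rpow_le_rpow_of_nonpos hδ hs (by linarith)
    _ = δ ^ (2 - t.re) * Real.exp (Real.pi * |t.im|) * (‖s‖ ^ 2)⁻¹ := by ring

theorem verticalLine.integrable_cpow_neg {σ : ℝ} (hσ : 0 < σ) {t : ℂ} (ht : 2 ≤ t.re) :
    Integrable fun w => verticalLine σ w ^ (-t) :=
  ((integrable_inv_norm_sq hσ.ne').const_mul _).mono' (continuous_cpow hσ _).aestronglyMeasurable
    (.of_forall fun w => norm_cpow_neg_le_of_le_norm hσ (le_norm σ w) ht)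

theorem fourier_indicator_cpow_mul_exp {σ : ℝ} (hσ : 0 < σ) {t : ℂ} (ht : 0 < t.re) :
    𝓕 ((Ioi (0 : ℝ)).indicator fun v : ℝ => (v : ℂ) ^ (t - 1) * cexp (-(σ * v))) =
      fun w => verticalLine σ w ^ (-t) * Gamma t := by
  ext w
  rw [Real.fourier_real_eq_integral_exp_smul,
    ← laplace_cpow ht (by simpa using hσ : 0 < (verticalLine σ w).re),
    ← integral_indicator measurableSet_Ioi]
  congr 1
  ext v
  by_cases hv : v ∈ Ioi (0 : ℝ)
  · rw [indicator_of_mem hv, indicator_of_mem hv, smul_eq_mul, mul_left_comm, ← Complex.exp_add]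
    congr 2
    rw [verticalLine]
    push_cast
    ring
  · rw [indicator_of_notMem hv, indicator_of_notMem hv, smul_zero]

theorem inverse_laplace_cpow {σ y : ℝ} (hσ : 0 < σ) (hy : 0 < y) {t : ℂ} (ht : 2 ≤ t.re) :
    ∫ w : ℝ, cexp (verticalLine σ w * y) * verticalLine σ w ^ (-t) =
      (y : ℂ) ^ (t - 1) / Gamma t := by
  have ht₀ : 0 < t.re := by linarith
  have hΓ : Gamma t ≠ 0 := Gamma_ne_zero_of_re_pos ht₀
  set g : ℝ → ℂ := fun v => (v : ℂ) ^ (t - 1) * cexp (-(σ * v)) with hg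
  have fourier : 𝓕 ((Ioi (0 : ℝ)).indicator g) = fun w => verticalLine σ w ^ (-t) * Gamma t :=
    fourier_indicator_cpow_mul_exp hσ ht₀
  have integrable : Integrable ((Ioi (0 : ℝ)).indicator g) :=
    (integrable_indicator_iff measurableSet_Ioi).2 <|
      integrableOn_cpow_mul_exp_neg_mul (by simpa using ht₀) (by simpa using hσ)
  have fourier_integrable : Integrable (𝓕 ((Ioi (0 : ℝ)).indicator g)) :=
    fourier ▸ (verticalLine.integrable_cpow_neg hσ ht).mul_const _
  have continuousAt : ContinuousAt ((Ioi (0 : ℝ)).indicator g) y :=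
    (((continuousOn_ofReal_cpow_Ioi _).continuousAt (Ioi_mem_nhds hy)).mul (by fun_prop)).congr
      (eqOn_indicator.symm.eventuallyEq_of_mem (Ioi_mem_nhds hy))
  have inversion := integrable.fourierInv_fourier_eq fourier_integrable continuousAt
  rw [Real.fourierInv_eq', fourier, indicator_of_mem (mem_Ioi.2 hy)] at inversion
  have integrand (w : ℝ) : cexp (verticalLine σ w * y) * verticalLine σ w ^ (-t) =
      cexp (σ * y) / Gamma t * (cexp (((2 * Real.pi * inner ℝ w y : ℝ) : ℂ) * I) •
        (verticalLine σ w ^ (-t) * Gamma t)) := by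
    have exponent : verticalLine σ w * y =
        σ * y + ((2 * Real.pi * inner ℝ w y : ℝ) : ℂ) * I := by
      simp only [verticalLine, RCLike.inner_apply, conj_trivial]
      push_cast
      ring
    rw [exponent, Complex.exp_add, smul_eq_mul]
    field_simp
  simp_rw [integrand]
  rw [integral_const_mul, inversion]
  simp only [hg, Complex.exp_neg]
  field_simp

/-! ### Shifting a vertical contour -/

theorem verticalLine.integrable_comp {G : ℂ → ℂ} {C σ : ℝ} (hσ : σ ≠ 0)
    (hG : ContinuousOn G {s | s.re = σ}) (hbound : ∀ s, s.re = σ → ‖G s‖ ≤ C * (‖s‖ ^ 2)⁻¹) :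
    Integrable fun w => G (verticalLine σ w) :=
  ((integrable_inv_norm_sq hσ).const_mul C).mono'
    (hG.comp_continuous (verticalLine.continuous σ) (re_eq σ)).aestronglyMeasurable
    (.of_forall fun w => hbound _ (re_eq σ w))

section ContourShift

variable {G : ℂ → ℂ} {C σ₁ σ₂ : ℝ}

theorem norm_integral_horizontal_le (hσ : σ₁ ≤ σ₂) (hC : 0 ≤ C)
    (hbound : ∀ s : ℂ, s.re ∈ Icc σ₁ σ₂ → ‖G s‖ ≤ C * (‖s‖ ^ 2)⁻¹) {τ : ℝ} (hτ : τ ≠ 0) :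
    ‖∫ x in σ₁..σ₂, G (x + τ * I)‖ ≤ C * (τ ^ 2)⁻¹ * (σ₂ - σ₁) := by
  rw [← abs_of_nonneg (sub_nonneg.2 hσ)]
  refine intervalIntegral.norm_integral_le_of_norm_le_const fun x hx => ?_
  rw [uIoc_of_le hσ] at hx
  have abs_le_norm : |τ| ≤ ‖(x : ℂ) + τ * I‖ := by simpa using abs_im_le_norm ((x : ℂ) + τ * I)
  calc ‖G (x + τ * I)‖ ≤ C * (‖(x : ℂ) + τ * I‖ ^ 2)⁻¹ := hbound _ (by simpa using ⟨hx.1.le, hx.2⟩)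
    _ ≤ C * (τ ^ 2)⁻¹ := by
        rw [← sq_abs τ]
        gcongr

theorem integral_vertical_eq_smul_integral_verticalLine (G : ℂ → ℂ) (σ T : ℝ) :
    ∫ y in (-(2 * Real.pi * T))..(2 * Real.pi * T), G (σ + y * I) =
      (2 * Real.pi : ℝ) • ∫ w in (-T)..T, G (verticalLine σ w) := by
  simp only [verticalLine,
    intervalIntegral.smul_integral_comp_mul_left fun y : ℝ => G (σ + (y : ℂ) * I), mul_neg]

theorem norm_integral_verticalLine_sub_le (hσ : σ₁ ≤ σ₂) (hC : 0 ≤ C)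
    (hG : DifferentiableOn ℂ G (re ⁻¹' Icc σ₁ σ₂))
    (hbound : ∀ s : ℂ, s.re ∈ Icc σ₁ σ₂ → ‖G s‖ ≤ C * (‖s‖ ^ 2)⁻¹) {T : ℝ} (hT : 0 < T) :
    2 * Real.pi *
        ‖(∫ w in (-T)..T, G (verticalLine σ₁ w)) - ∫ w in (-T)..T, G (verticalLine σ₂ w)‖ ≤
      2 * (C * ((2 * Real.pi * T) ^ 2)⁻¹ * (σ₂ - σ₁)) := by
  have hτ : 2 * Real.pi * T ≠ 0 := by positivity
  have bottom := norm_integral_horizontal_le hσ hC hbound (neg_ne_zero.2 hτ)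
  have top := norm_integral_horizontal_le hσ hC hbound hτ
  rw [neg_sq] at bottom
  have cauchy := integral_boundary_rect_eq_zero_of_differentiableOn G
    (σ₁ + (-(2 * Real.pi * T) : ℝ) * I) (σ₂ + (2 * Real.pi * T : ℝ) * I)
    (hG.mono fun s hs => by simpa [uIcc_of_le hσ] using (mem_reProdIm.1 hs).1)
  simp only [add_re, ofReal_re, mul_re, I_re, mul_zero, ofReal_im, I_im, mul_one, sub_self,
    add_zero, add_im, mul_im, zero_add, integral_vertical_eq_smul_integral_verticalLine,
    smul_eq_mul, real_smul] at cauchy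
  have vertical_eq_horizontal :
      I * ((2 * Real.pi : ℝ) * ((∫ w in (-T)..T, G (verticalLine σ₁ w)) -
          ∫ w in (-T)..T, G (verticalLine σ₂ w))) =
        (∫ x in σ₁..σ₂, G (x + (-(2 * Real.pi * T) : ℝ) * I)) -
          ∫ x in σ₁..σ₂, G (x + (2 * Real.pi * T : ℝ) * I) := by
    linear_combination -cauchy
  have norm_eq := congrArg norm vertical_eq_horizontal
  rw [norm_mul, norm_I, one_mul, norm_mul, norm_real,
    Real.norm_of_nonneg Real.two_pi_pos.le] at norm_eq
  rw [norm_eq, two_mul (C * _ * _)]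
  exact (norm_sub_le _ _).trans (add_le_add bottom top)

theorem integral_verticalLine_eq (hσ₁ : 0 < σ₁) (hσ : σ₁ ≤ σ₂) (hC : 0 ≤ C)
    (hG : DifferentiableOn ℂ G (re ⁻¹' Icc σ₁ σ₂))
    (hbound : ∀ s : ℂ, s.re ∈ Icc σ₁ σ₂ → ‖G s‖ ≤ C * (‖s‖ ^ 2)⁻¹) :
    ∫ w, G (verticalLine σ₁ w) = ∫ w, G (verticalLine σ₂ w) := by
  have truncated_tendsto {σ : ℝ} (hmem : σ ∈ Icc σ₁ σ₂) :
      Tendsto (fun T : ℝ => ∫ w in (-T)..T, G (verticalLine σ w)) atTop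
        (𝓝 (∫ w, G (verticalLine σ w))) :=
    intervalIntegral_tendsto_integral
      (verticalLine.integrable_comp (hσ₁.trans_le hmem.1).ne'
        (hG.continuousOn.mono fun s hs => by rwa [mem_preimage, mem_ofPred.1 hs])
        fun s hs => hbound s (hs ▸ hmem)) tendsto_neg_atTop_atBot tendsto_id
  refine sub_eq_zero.1 <| tendsto_nhds_unique
    ((truncated_tendsto (left_mem_Icc.2 hσ)).sub (truncated_tendsto (right_mem_Icc.2 hσ))) ?_
  refine squeeze_zero_norm'
    (a := fun T => 2 * (C * ((2 * Real.pi * T) ^ 2)⁻¹ * (σ₂ - σ₁)) / (2 * Real.pi)) ?_ ?_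
  · filter_upwards [eventually_gt_atTop 0] with T hT
    rw [le_div_iff₀' Real.two_pi_pos]
    exact norm_integral_verticalLine_sub_le hσ hC hG hbound hT
  · have inv_sq_tendsto : Tendsto (fun T : ℝ => ((2 * Real.pi * T) ^ 2)⁻¹) atTop (𝓝 0) :=
      ((tendsto_pow_atTop two_ne_zero).comp
        (tendsto_id.const_mul_atTop Real.two_pi_pos)).inv_tendsto_atTop
    simpa using (((inv_sq_tendsto.const_mul C).mul_const (σ₂ - σ₁)).const_mul 2).div_const
      (2 * Real.pi)

end ContourShift

/-! ### The kernel `s ^ (-c) / (1 - s ^ (-κ))` -/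

theorem exists_differentiableOn_eq_div_sub_simple_pole {U : Set ℂ} (hU : IsOpen U) {z₀ : ℂ}
    (hz₀ : z₀ ∈ U) {f d : ℂ → ℂ} (hf : DifferentiableOn ℂ f U) (hd : DifferentiableOn ℂ d U)
    (hd_zero : ∀ z ∈ U, d z = 0 ↔ z = z₀) (hd_deriv : deriv d z₀ ≠ 0) :
    ∃ H : ℂ → ℂ, DifferentiableOn ℂ H U ∧
      ∀ z ≠ z₀, H z = f z / d z - f z₀ / deriv d z₀ / (z - z₀) := by
  have hU_nhds : U ∈ 𝓝 z₀ := hU.mem_nhds hz₀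
  have d_eq (z : ℂ) : d z = (z - z₀) * dslope d z₀ z := by
    rw [← smul_eq_mul, sub_smul_dslope, (hd_zero z₀ hz₀).2 rfl, sub_zero]
  have dslope_ne_zero : ∀ z ∈ U, dslope d z₀ z ≠ 0 := by
    intro z hz hzero
    obtain rfl : z = z₀ := (hd_zero z hz).1 (by rw [d_eq, hzero, mul_zero])
    exact hd_deriv (by rwa [dslope_same] at hzero)
  refine ⟨dslope (fun z => f z / dslope d z₀ z) z₀,
    (differentiableOn_dslope hU_nhds).2
      (hf.div ((differentiableOn_dslope hU_nhds).2 hd) dslope_ne_zero), fun z hz => ?_⟩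
  rw [dslope_of_ne _ hz, slope_def_field, dslope_same, d_eq z, sub_div, div_div, mul_comm (z - z₀)]

theorem eq_one_of_cpow_eq_one {s t : ℂ} (hs : s ≠ 0) (ht : t ≠ 0) (hst : s ^ t = 1)
    (him : |(log s * t).im| < 2 * Real.pi) : s = 1 := by
  rw [cpow_def_of_ne_zero hs, exp_eq_one_iff] at hst
  obtain ⟨n, hn⟩ := hst
  have im_eq : (log s * t).im = n * (2 * Real.pi) := by simp [hn]
  have n_eq_zero : n = 0 := by
    rw [im_eq, abs_mul, abs_of_pos Real.two_pi_pos, mul_lt_iff_lt_one_left Real.two_pi_pos] at him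
    exact Int.abs_lt_one_iff.1 (by exact_mod_cast him)
  have log_eq_zero : log s = 0 := by simpa [n_eq_zero, ht] using hn
  rw [← exp_log hs, log_eq_zero, Complex.exp_zero]

theorem norm_eq_one_of_cpow_ofReal_eq_one {s : ℂ} {r : ℝ} (hr : r ≠ 0) (h : s ^ (r : ℂ) = 1) :
    ‖s‖ = 1 := by
  have norm_rpow : ‖s‖ ^ r = 1 := by rw [← norm_cpow_real, h, norm_one]
  exact (Real.rpow_left_inj (norm_nonneg s) zero_le_one hr).1 (by rw [norm_rpow, Real.one_rpow])

theorem exists_cpow_ofReal_eq_one_imp_eq_one {r : ℝ} (hr : r ≠ 0) :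
    ∃ ρ : ℝ, 0 ≤ ρ ∧ ρ < 1 ∧ ∀ s : ℂ, ρ < s.re → s ^ (r : ℂ) = 1 → s = 1 := by
  set φ := min (2 * Real.pi / |r|) Real.pi
  have hφ_pos : 0 < φ := lt_min (by positivity) Real.pi_pos
  have cos_lt_one : Real.cos φ < 1 := by
    simpa using Real.cos_lt_cos_of_nonneg_of_le_pi le_rfl (min_le_right _ _) hφ_pos
  refine ⟨max 0 (Real.cos φ), le_max_left _ _, max_lt one_pos cos_lt_one, fun s hs hsr => ?_⟩
  have hs_ne : s ≠ 0 := ne_zero_of_re_pos ((le_max_left _ _).trans_lt hs)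
  have re_eq : s.re = Real.cos |s.arg| := by
    rw [Real.cos_abs, cos_arg hs_ne, norm_eq_one_of_cpow_ofReal_eq_one hr hsr, div_one]
  have arg_lt : |s.arg| < φ := by
    by_contra! hle
    have := Real.cos_le_cos_of_nonneg_of_le_pi hφ_pos.le (abs_arg_le_pi s) hle
    linarith [(le_max_right 0 (Real.cos φ)).trans_lt hs]
  refine eq_one_of_cpow_eq_one hs_ne (ofReal_ne_zero.2 hr) hsr ?_
  rw [im_mul_ofReal, log_im, abs_mul, ← lt_div_iff₀ (abs_pos.2 hr)]
  exact arg_lt.trans_le (min_le_left _ _)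

/-- The Laplace transform of `y ↦ y ^ (c - 1) * E_{κ,c}(y ^ κ)`, where `E_{κ,c}` is the
Mittag-Leffler function. -/
noncomputable def mittagLefflerKernel (κ : ℝ) (c s : ℂ) : ℂ := s ^ (-c) / (1 - s ^ (-(κ : ℂ)))

theorem norm_cpow_neg_ofReal (s : ℂ) (κ : ℝ) : ‖s ^ (-(κ : ℂ))‖ = ‖s‖ ^ (-κ) := by
  rw [← ofReal_neg, norm_cpow_real]

theorem hasSum_mittagLefflerKernel {κ : ℝ} (hκ : 0 < κ) (c : ℂ) {s : ℂ} (hs : 1 < ‖s‖) :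
    HasSum (fun n : ℕ => s ^ (-(κ * n + c))) (mittagLefflerKernel κ c s) := by
  have hs_ne : s ≠ 0 := norm_pos_iff.1 (one_pos.trans hs)
  have ratio_lt_one : ‖s ^ (-(κ : ℂ))‖ < 1 := by
    rw [norm_cpow_neg_ofReal]
    exact Real.rpow_lt_one_of_one_lt_of_neg hs (neg_lt_zero.2 hκ)
  have term (n : ℕ) : s ^ (-(κ * n + c)) = s ^ (-c) * (s ^ (-(κ : ℂ))) ^ n := by
    rw [← cpow_nat_mul, ← cpow_add _ _ hs_ne]
    congr 1
    ring
  simp only [term]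
  exact (hasSum_geometric_of_norm_lt_one ratio_lt_one).mul_left _

theorem norm_mittagLefflerKernel_le {κ q : ℝ} {c s : ℂ} (hc : 2 ≤ c.re) (hs : 1 ≤ ‖s‖)
    (hq : ‖s‖ ^ (-κ) ≤ q) (hq_lt : q < 1) :
    ‖mittagLefflerKernel κ c s‖ ≤
      (1 - q)⁻¹ * Real.exp (Real.pi * |c.im|) * (‖s‖ ^ 2)⁻¹ := by
  have denominator : 1 - q ≤ ‖1 - s ^ (-(κ : ℂ))‖ := by
    have := norm_sub_norm_le 1 (s ^ (-(κ : ℂ)))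
    rw [norm_one, norm_cpow_neg_ofReal] at this
    linarith
  have numerator : ‖s ^ (-c)‖ ≤ Real.exp (Real.pi * |c.im|) * (‖s‖ ^ 2)⁻¹ := by
    simpa using norm_cpow_neg_le_of_le_norm one_pos hs hc
  rw [mittagLefflerKernel, norm_div, div_eq_inv_mul, mul_assoc]
  have : 0 < 1 - q := sub_pos.2 hq_lt
  gcongr

theorem mittagLefflerKernel_one_two {s : ℂ} (hs₀ : s ≠ 0) (hs₁ : s ≠ 1) :
    mittagLefflerKernel 1 2 s = 1 / (s - 1) - 1 / s := by
  have hs₁' : s - 1 ≠ 0 := sub_ne_zero.2 hs₁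
  have kernel_eq : mittagLefflerKernel 1 2 s = (s ^ 2)⁻¹ / (1 - s⁻¹) := by
    rw [mittagLefflerKernel, cpow_neg, ofReal_one, cpow_neg_one, cpow_ofNat]
  have denominator : 1 - s⁻¹ = (s - 1) / s := by field_simp
  rw [kernel_eq, denominator]
  field_simp
  ring

theorem hasDerivAt_one_sub_cpow_neg (κ : ℝ) :
    HasDerivAt (fun s : ℂ => 1 - s ^ (-(κ : ℂ))) κ 1 := by
  simpa using ((hasDerivAt_id (1 : ℂ)).cpow_const (c := -(κ : ℂ)) (by simp)).const_sub 1

-- Subtracting `κ⁻¹` times the kernel `1 / (s (s - 1))` of `exp y - 1` removes the pole at `s = 1`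
-- without spoiling the decay at infinity.
theorem exists_regular_mittagLefflerKernel_sub {κ : ℝ} (hκ : 0 < κ) (c : ℂ) :
    ∃ (ρ : ℝ) (G : ℂ → ℂ), 0 ≤ ρ ∧ ρ < 1 ∧ DifferentiableOn ℂ G (re ⁻¹' Ioi ρ) ∧
      ∀ s : ℂ, ρ < s.re → s ≠ 1 →
        G s = mittagLefflerKernel κ c s - (κ : ℂ)⁻¹ * mittagLefflerKernel 1 2 s := by
  obtain ⟨ρ, hρ₀, hρ₁, zero_free⟩ := exists_cpow_ofReal_eq_one_imp_eq_one (neg_ne_zero.2 hκ.ne')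
  rw [ofReal_neg] at zero_free
  have hU : IsOpen (re ⁻¹' Ioi ρ) := isOpen_Ioi.preimage continuous_re
  have cpow_differentiableOn (t : ℂ) : DifferentiableOn ℂ (fun s : ℂ => s ^ t) (re ⁻¹' Ioi ρ) :=
    fun s hs => (differentiableAt_id.cpow_const (.inl (hρ₀.trans_lt hs))).differentiableWithinAt
  have ne_zero {s : ℂ} (hs : ρ < s.re) : s ≠ 0 := ne_zero_of_re_pos (hρ₀.trans_lt hs)
  obtain ⟨H, H_differentiableOn, H_eq⟩ := exists_differentiableOn_eq_div_sub_simple_pole hU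
    (z₀ := 1) (by simpa using hρ₁) (cpow_differentiableOn (-c))
    ((cpow_differentiableOn (-(κ : ℂ))).const_sub 1)
    (fun s hs => ⟨fun h => zero_free s hs (sub_eq_zero.1 h).symm, by rintro rfl; simp⟩)
    (by simpa [(hasDerivAt_one_sub_cpow_neg κ).deriv] using hκ.ne')
  refine ⟨ρ, fun s => H s + (κ : ℂ)⁻¹ * s⁻¹, hρ₀, hρ₁,
    H_differentiableOn.add ((differentiableOn_inv.mono fun s hs => ne_zero hs).const_mul _),
    fun s hs hs₁ => ?_⟩
  dsimp only
  rw [H_eq s hs₁, (hasDerivAt_one_sub_cpow_neg κ).deriv, one_cpow,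
    mittagLefflerKernel_one_two (ne_zero hs) hs₁, mittagLefflerKernel]
  ring

theorem exists_norm_le_mul_inv_norm_sq {K : Set ℂ} (hK : IsClosed K) (hK₀ : 0 ∉ K) {G : ℂ → ℂ}
    (hG : ContinuousOn G K) {R C : ℝ} (hfar : ∀ s ∈ K, R < ‖s‖ → ‖G s‖ ≤ C * (‖s‖ ^ 2)⁻¹) :
    ∃ C', 0 ≤ C' ∧ ∀ s ∈ K, ‖G s‖ ≤ C' * (‖s‖ ^ 2)⁻¹ := by
  obtain ⟨C₀, near⟩ := ((isCompact_closedBall (0 : ℂ) R).inter_left hK).exists_bound_of_continuousOn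
    (f := fun s => ‖G s‖ * ‖s‖ ^ 2)
    ((hG.mono inter_subset_left).norm.mul (continuous_norm.pow 2).continuousOn)
  refine ⟨max 0 (max C₀ C), le_max_left _ _, fun s hs => ?_⟩
  have norm_pos : 0 < ‖s‖ := norm_pos_iff.2 fun h => hK₀ (h ▸ hs)
  rcases le_or_gt ‖s‖ R with hle | hlt
  · have := near s ⟨hs, mem_closedBall_zero_iff.2 hle⟩
    rw [Real.norm_of_nonneg (by positivity)] at this
    rw [← div_eq_mul_inv, le_div_iff₀ (by positivity)]
    exact this.trans ((le_max_left _ _).trans (le_max_right _ _))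
  · refine (hfar s hs hlt).trans ?_
    gcongr
    exact (le_max_right _ _).trans (le_max_right _ _)

theorem exists_norm_mittagLefflerKernel_sub_le {κ : ℝ} (hκ : 0 < κ) {c : ℂ} (hc : 2 ≤ c.re) :
    ∃ R C : ℝ, 1 ≤ R ∧ ∀ s : ℂ, R < ‖s‖ →
      ‖mittagLefflerKernel κ c s - (κ : ℂ)⁻¹ * mittagLefflerKernel 1 2 s‖ ≤ C * (‖s‖ ^ 2)⁻¹ := by
  have ratio_le_half {r : ℝ} (hr : 0 < r) : ∀ᶠ R : ℝ in atTop, R ^ (-r) ≤ 1 / 2 :=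
    (tendsto_rpow_neg_atTop hr).eventually (ge_mem_nhds (by norm_num))
  obtain ⟨R, hR₁, hκR, h1R⟩ :=
    ((eventually_ge_atTop 1).and ((ratio_le_half hκ).and (ratio_le_half one_pos))).exists
  refine ⟨R, (1 - 1 / 2)⁻¹ * Real.exp (Real.pi * |c.im|) +
    ‖(κ : ℂ)⁻¹‖ * ((1 - 1 / 2)⁻¹ * Real.exp (Real.pi * |(2 : ℂ).im|)), hR₁, fun s hs => ?_⟩
  have norm_rpow_le {r : ℝ} (hr : 0 ≤ r) : ‖s‖ ^ (-r) ≤ R ^ (-r) :=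
    Real.rpow_le_rpow_of_nonpos (by linarith) hs.le (neg_nonpos.2 hr)
  have bound_c := norm_mittagLefflerKernel_le hc (hR₁.trans hs.le)
    ((norm_rpow_le hκ.le).trans hκR) (by norm_num)
  have bound_two := norm_mittagLefflerKernel_le (c := 2) (by simp) (hR₁.trans hs.le)
    ((norm_rpow_le zero_le_one).trans h1R) (by norm_num)
  rw [add_mul, mul_assoc ‖_‖]
  refine (norm_sub_le _ _).trans (add_le_add bound_c ?_)
  rw [norm_mul]
  gcongr

theorem exists_regular_mittagLefflerKernel_sub_bound {κ : ℝ} (hκ : 0 < κ) {c : ℂ}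
    (hc : 2 ≤ c.re) :
    ∃ (σ C : ℝ) (G : ℂ → ℂ), 0 < σ ∧ σ < 1 ∧ 0 ≤ C ∧ DifferentiableOn ℂ G (re ⁻¹' Ici σ) ∧
      (∀ s : ℂ, σ ≤ s.re → ‖G s‖ ≤ C * (‖s‖ ^ 2)⁻¹) ∧
      ∀ s : ℂ, σ ≤ s.re → s ≠ 1 →
        G s = mittagLefflerKernel κ c s - (κ : ℂ)⁻¹ * mittagLefflerKernel 1 2 s := by
  obtain ⟨ρ, G, hρ₀, hρ₁, hG, G_eq⟩ := exists_regular_mittagLefflerKernel_sub hκ c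
  obtain ⟨R, C, hR, far⟩ := exists_norm_mittagLefflerKernel_sub_le hκ hc
  obtain ⟨σ, hρσ, hσ₁⟩ := exists_between hρ₁
  have hσ₀ : 0 < σ := hρ₀.trans_lt hρσ
  have hG' : DifferentiableOn ℂ G (re ⁻¹' Ici σ) := hG.mono fun s hs => hρσ.trans_le hs
  have G_far (s : ℂ) (hs : σ ≤ s.re) (hRs : R < ‖s‖) : ‖G s‖ ≤ C * (‖s‖ ^ 2)⁻¹ := by
    have hs₁ : s ≠ 1 := fun h => by simp [h] at hRs; linarith
    simpa only [G_eq s (hρσ.trans_le hs) hs₁] using far s hRs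
  obtain ⟨C', hC', bound⟩ := exists_norm_le_mul_inv_norm_sq
    (isClosed_Ici.preimage continuous_re) (by simpa using hσ₀) hG'.continuousOn G_far
  exact ⟨σ, C', G, hσ₀, hσ₁, hC', hG', bound, fun s hs => G_eq s (hρσ.trans_le hs)⟩

/-! ### Mittag-Leffler functions -/

theorem continuousOn_mittagLefflerKernel {κ : ℝ} (hκ : 0 < κ) (c : ℂ) :
    ContinuousOn (mittagLefflerKernel κ c) (re ⁻¹' Ioi 1) := by
  intro s (hs : 1 < s.re)
  have cpow_continuousAt (t : ℂ) : ContinuousAt (fun s : ℂ => s ^ t) s :=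
    (differentiableAt_id.cpow_const (.inl (one_pos.trans hs))).continuousAt
  refine ((cpow_continuousAt _).div (continuousAt_const.sub (cpow_continuousAt _))
    fun (h : 1 - s ^ (-(κ : ℂ)) = 0) => ?_).continuousWithinAt
  have := Real.rpow_lt_one_of_one_lt_of_neg (hs.trans_le (re_le_norm s)) (neg_lt_zero.2 hκ)
  rw [← norm_cpow_neg_ofReal, ← sub_eq_zero.1 h, norm_one] at this
  exact this.false

section LineIntegral

variable {κ σ : ℝ} {c : ℂ}

theorem integrable_exp_mul_mittagLefflerKernel (hκ : 0 < κ) (hσ : 1 < σ) (hc : 2 ≤ c.re)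
    (y : ℝ) :
    Integrable fun w =>
      cexp (verticalLine σ w * y) * mittagLefflerKernel κ c (verticalLine σ w) := by
  have kernel_integrable : Integrable fun w => mittagLefflerKernel κ c (verticalLine σ w) :=
    verticalLine.integrable_comp (one_pos.trans hσ).ne'
      ((continuousOn_mittagLefflerKernel hκ c).mono fun s (hs : s.re = σ) =>
        show 1 < s.re from hs ▸ hσ)
      fun s hs => by
        have hσs : σ ≤ ‖s‖ := hs ▸ re_le_norm s
        exact norm_mittagLefflerKernel_le hc (hσ.le.trans hσs)
          (Real.rpow_le_rpow_of_nonpos (one_pos.trans hσ) hσs (neg_nonpos.2 hκ.le))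
          (Real.rpow_lt_one_of_one_lt_of_neg hσ (neg_lt_zero.2 hκ))
  refine kernel_integrable.bdd_mul (c := Real.exp (σ * y)) ?_
    (.of_forall fun w => (verticalLine.norm_exp_mul_ofReal σ w y).le)
  exact (((verticalLine.continuous σ).mul continuous_const).cexp).aestronglyMeasurable

theorem norm_exp_mul_cpow_le (hκ : 0 ≤ κ) (hσ : 0 < σ) (c : ℂ) (y w : ℝ) (n : ℕ) :
    ‖cexp (verticalLine σ w * y) * verticalLine σ w ^ (-(κ * n + c))‖ ≤
      (σ ^ (-κ)) ^ n * (Real.exp (σ * y) * ‖verticalLine σ w ^ (-c)‖) := by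
  have term : verticalLine σ w ^ (-(κ * n + c)) =
      (verticalLine σ w ^ (-(κ : ℂ))) ^ n * verticalLine σ w ^ (-c) := by
    rw [← cpow_nat_mul, ← cpow_add _ _ (verticalLine.ne_zero hσ w)]
    congr 1
    ring
  rw [term, norm_mul, norm_mul, norm_pow, verticalLine.norm_exp_mul_ofReal, mul_left_comm,
    norm_cpow_neg_ofReal]
  gcongr ?_ ^ n * _
  exact Real.rpow_le_rpow_of_nonpos hσ (verticalLine.le_norm σ w) (neg_nonpos.2 hκ)

theorem hasSum_integral_mittagLefflerKernel (hκ : 0 < κ) (hσ : 1 < σ) (hc : 2 ≤ c.re) {y : ℝ}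
    (hy : 0 < y) :
    HasSum (fun n : ℕ => (y : ℂ) ^ (κ * n + c - 1) / Gamma (κ * n + c))
      (∫ w, cexp (verticalLine σ w * y) * mittagLefflerKernel κ c (verticalLine σ w)) := by
  have hσ₀ : 0 < σ := one_pos.trans hσ
  have exponent_re (n : ℕ) : 2 ≤ (κ * n + c).re := by
    have : 0 ≤ κ * n := by positivity
    simpa using by linarith
  have majorant_integrable (n : ℕ) : Integrable fun w =>
      (σ ^ (-κ)) ^ n * (Real.exp (σ * y) * ‖verticalLine σ w ^ (-c)‖) :=
    ((verticalLine.integrable_cpow_neg hσ₀ hc).norm.const_mul _).const_mul _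
  have term_integrable (n : ℕ) : Integrable fun w =>
      cexp (verticalLine σ w * y) * verticalLine σ w ^ (-(κ * n + c)) :=
    (majorant_integrable n).mono'
      ((((verticalLine.continuous σ).mul continuous_const).cexp).mul
        (verticalLine.continuous_cpow hσ₀ _)).aestronglyMeasurable
      (.of_forall fun w => norm_exp_mul_cpow_le hκ.le hσ₀ c y w n)
  have norm_summable : Summable fun n : ℕ =>
      ∫ w, ‖cexp (verticalLine σ w * y) * verticalLine σ w ^ (-(κ * n + c))‖ := by
    refine .of_nonneg_of_le (fun n => integral_nonneg fun w => norm_nonneg _)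
      (fun n => integral_mono (term_integrable n).norm (majorant_integrable n)
        fun w => norm_exp_mul_cpow_le hκ.le hσ₀ c y w n) ?_
    simp only [integral_const_mul]
    exact (summable_geometric_of_lt_one (by positivity)
      (Real.rpow_lt_one_of_one_lt_of_neg hσ (neg_lt_zero.2 hκ))).mul_right _
  have termwise := hasSum_integral_of_summable_integral_norm term_integrable norm_summable
  have pointwise (w : ℝ) : ∑' n : ℕ,
      cexp (verticalLine σ w * y) * verticalLine σ w ^ (-(κ * n + c)) =
        cexp (verticalLine σ w * y) * mittagLefflerKernel κ c (verticalLine σ w) :=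
    ((hasSum_mittagLefflerKernel hκ c (hσ.trans_le (verticalLine.le_norm σ w))).mul_left _).tsum_eq
  simpa only [pointwise, inverse_laplace_cpow hσ₀ hy (exponent_re _)] using termwise

end LineIntegral

/-- The two-parameter Mittag-Leffler function `E_{κ,c}(z) = ∑ zⁿ / Γ(κn + c)`. -/
noncomputable def mittagLeffler (κ : ℝ) (c z : ℂ) : ℂ := ∑' n : ℕ, z ^ n / Gamma (κ * n + c)

theorem ofReal_rpow_pow {y : ℝ} (hy : 0 ≤ y) (κ : ℝ) (n : ℕ) :
    ((y ^ κ : ℝ) : ℂ) ^ n = (y : ℂ) ^ ((κ : ℂ) * n) := by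
  rw [ofReal_cpow hy, mul_comm, cpow_nat_mul]

theorem cpow_mul_mittagLeffler_term {y : ℝ} (hy : 0 < y) (κ : ℝ) (c : ℂ) (n : ℕ) :
    (y : ℂ) ^ (c - 1) * (((y ^ κ : ℝ) : ℂ) ^ n / Gamma (κ * n + c)) =
      (y : ℂ) ^ (κ * n + c - 1) / Gamma (κ * n + c) := by
  rw [ofReal_rpow_pow hy.le, mul_div_assoc', ← cpow_add _ _ (ofReal_ne_zero.2 hy.ne')]
  congr 2
  ring

theorem hasSum_exp_sub_one (y : ℂ) :
    HasSum (fun n : ℕ => y ^ (((1 : ℝ) : ℂ) * n + 2 - 1) / Gamma (((1 : ℝ) : ℂ) * n + 2))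
      (cexp y - 1) := by
  have exp_series := NormedSpace.expSeries_div_hasSum_exp y
  rw [← exp_eq_exp_ℂ, ← hasSum_nat_add_iff' 1] at exp_series
  have term (n : ℕ) : y ^ (n + 1) / ((n + 1).factorial : ℂ) =
      y ^ (((1 : ℝ) : ℂ) * n + 2 - 1) / Gamma (((1 : ℝ) : ℂ) * n + 2) := by
    rw [← Gamma_nat_eq_factorial, ← cpow_natCast]
    push_cast
    ring_nf
  simpa only [term, Finset.range_one, Finset.sum_singleton, pow_zero, Nat.factorial_zero,
    Nat.cast_one, div_one] using exp_series

section

variable {κ : ℝ} {c : ℂ}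

theorem norm_integral_exp_mul_le {G : ℂ → ℂ} {σ C : ℝ} (hσ : σ ≠ 0)
    (hbound : ∀ s : ℂ, s.re = σ → ‖G s‖ ≤ C * (‖s‖ ^ 2)⁻¹) (y : ℝ) :
    ‖∫ w, cexp (verticalLine σ w * y) * G (verticalLine σ w)‖ ≤
      (C * ∫ w, (‖verticalLine σ w‖ ^ 2)⁻¹) * Real.exp (σ * y) := by
  rw [mul_comm, ← integral_const_mul, ← integral_const_mul]
  refine norm_integral_le_of_norm_le
    (((verticalLine.integrable_inv_norm_sq hσ).const_mul C).const_mul _) (.of_forall fun w => ?_)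
  rw [norm_mul, verticalLine.norm_exp_mul_ofReal]
  gcongr
  exact hbound _ (verticalLine.re_eq σ w)

theorem exists_norm_integral_mittagLefflerKernel_sub_le (hκ : 0 < κ) (hc : 2 ≤ c.re) :
    ∃ σ C : ℝ, 0 < σ ∧ σ < 1 ∧ ∀ y : ℝ, 0 < y →
      ‖(∫ w, cexp (verticalLine 2 w * y) * mittagLefflerKernel κ c (verticalLine 2 w)) -
        (κ : ℂ)⁻¹ * (cexp y - 1)‖ ≤ C * Real.exp (σ * y) := by
  obtain ⟨σ, C, G, hσ₀, hσ₁, hC, hG, G_bound, G_eq⟩ :=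
    exists_regular_mittagLefflerKernel_sub_bound hκ hc
  refine ⟨σ, C * ∫ w, (‖verticalLine σ w‖ ^ 2)⁻¹, hσ₀, hσ₁, fun y hy => ?_⟩
  have integral_one_two : ∫ w, cexp (verticalLine 2 w * y) *
      mittagLefflerKernel 1 2 (verticalLine 2 w) = cexp y - 1 :=
    (hasSum_integral_mittagLefflerKernel one_pos one_lt_two (by simp) hy).unique
      (hasSum_exp_sub_one y)
  have integral_G : ∫ w, cexp (verticalLine 2 w * y) * G (verticalLine 2 w) =
      (∫ w, cexp (verticalLine 2 w * y) * mittagLefflerKernel κ c (verticalLine 2 w)) -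
        (κ : ℂ)⁻¹ * (cexp y - 1) := by
    rw [← integral_one_two, ← integral_const_mul, ← integral_sub
      (integrable_exp_mul_mittagLefflerKernel hκ one_lt_two hc y)
      ((integrable_exp_mul_mittagLefflerKernel one_pos one_lt_two (by simp) y).const_mul _)]
    congr 1
    ext w
    have ne_one : verticalLine 2 w ≠ 1 := fun h => by simpa using congrArg re h
    rw [G_eq _ (by simpa using by linarith) ne_one]
    ring
  have shift : ∫ w, cexp (verticalLine σ w * y) * G (verticalLine σ w) =
      ∫ w, cexp (verticalLine 2 w * y) * G (verticalLine 2 w) := by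
    refine integral_verticalLine_eq (G := fun s => cexp (s * y) * G s)
      (C := Real.exp (2 * y) * C) hσ₀ (by linarith) (by positivity)
      (DifferentiableOn.mul (by fun_prop) (hG.mono fun s hs => hs.1)) fun s hs => ?_
    rw [norm_mul, norm_exp, re_mul_ofReal, mul_assoc]
    gcongr
    exacts [hs.2, G_bound s hs.1]
  rw [← integral_G, ← shift]
  exact norm_integral_exp_mul_le hσ₀.ne' (fun s hs => G_bound s hs.ge) y

theorem hasSum_mittagLeffler_integral (hκ : 0 < κ) (hc : 2 ≤ c.re) {y : ℝ} (hy : 0 < y) :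
    HasSum (fun n : ℕ => ((y ^ κ : ℝ) : ℂ) ^ n / Gamma (κ * n + c))
      ((y : ℂ) ^ (1 - c) *
        ∫ w, cexp (verticalLine 2 w * y) * mittagLefflerKernel κ c (verticalLine 2 w)) := by
  have termwise := (hasSum_integral_mittagLefflerKernel hκ one_lt_two hc hy).mul_left
    ((y : ℂ) ^ (1 - c))
  have cpow_mul_cpow : (y : ℂ) ^ (1 - c) * (y : ℂ) ^ (c - 1) = 1 := by
    rw [← cpow_add _ _ (ofReal_ne_zero.2 hy.ne')]
    simp
  simpa only [← cpow_mul_mittagLeffler_term hy, ← mul_assoc, cpow_mul_cpow, one_mul] using termwise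

theorem mittagLeffler_term_add (κ : ℝ) (c z : ℂ) (N n : ℕ) :
    z ^ (n + N) / Gamma (κ * (n + N : ℕ) + c) = z ^ N * (z ^ n / Gamma (κ * n + (κ * N + c))) := by
  rw [pow_add, mul_div_right_comm, mul_comm]
  push_cast
  ring_nf

theorem exists_nat_two_le_mul_add (hκ : 0 < κ) (r : ℝ) : ∃ N : ℕ, 2 ≤ κ * N + r := by
  obtain ⟨N, hN⟩ := exists_nat_ge ((2 - r) / κ)
  rw [div_le_iff₀ hκ] at hN
  exact ⟨N, by linarith⟩

theorem summable_mittagLeffler (hκ : 0 < κ) (c : ℂ) {y : ℝ} (hy : 0 < y) :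
    Summable fun n : ℕ => ((y ^ κ : ℝ) : ℂ) ^ n / Gamma (κ * n + c) := by
  obtain ⟨N, hN⟩ := exists_nat_two_le_mul_add hκ c.re
  rw [← summable_nat_add_iff N]
  simp only [mittagLeffler_term_add]
  exact (hasSum_mittagLeffler_integral hκ (by simpa using hN) hy).summable.mul_left _

theorem mittagLeffler_eq_sum_add (hκ : 0 < κ) (c : ℂ) {y : ℝ} (hy : 0 < y) (N : ℕ) :
    mittagLeffler κ c (y ^ κ : ℝ) =
      (∑ n ∈ Finset.range N, ((y ^ κ : ℝ) : ℂ) ^ n / Gamma (κ * n + c)) +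
        ((y ^ κ : ℝ) : ℂ) ^ N * mittagLeffler κ (κ * N + c) (y ^ κ : ℝ) := by
  rw [mittagLeffler, ← (summable_mittagLeffler hκ c hy).sum_add_tsum_nat_add N]
  simp only [mittagLeffler_term_add, tsum_mul_left, mittagLeffler]

theorem rpow_mul_exp_isBigO {σ : ℝ} (hσ : σ < 1) (q p : ℝ) :
    (fun y : ℝ => y ^ q * Real.exp (σ * y)) =O[atTop] fun y => y ^ p * Real.exp y := by
  have decay := (isLittleO_exp_neg_mul_rpow_atTop (sub_pos.2 hσ) (p - q)).isBigO
  refine (((isBigO_refl (fun y : ℝ => y ^ q) atTop).mul decay).mul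
    (isBigO_refl Real.exp atTop)).congr' ?_ ?_
  · refine .of_forall fun y => ?_
    dsimp only
    rw [mul_assoc, ← Real.exp_add]
    ring_nf
  · filter_upwards [eventually_gt_atTop 0] with y hy
    rw [← Real.rpow_add hy, add_sub_cancel]

theorem rpow_isBigO_rpow_mul_exp (q p : ℝ) :
    (fun y : ℝ => y ^ q) =O[atTop] fun y => y ^ p * Real.exp y := by
  simpa using rpow_mul_exp_isBigO zero_lt_one q p

theorem ofReal_rpow_pow_isBigO (κ : ℝ) (n : ℕ) :
    (fun y : ℝ => ((y ^ κ : ℝ) : ℂ) ^ n) =O[atTop] fun y => y ^ (κ * n) := by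
  refine .of_bound 1 ?_
  filter_upwards [eventually_ge_atTop 0] with y hy
  rw [← ofReal_pow, norm_real, ← Real.rpow_natCast, ← Real.rpow_mul hy, one_mul]

theorem sum_mul_ofReal_rpow_pow_isBigO (κ p : ℝ) (u : ℕ → ℂ) (N : ℕ) :
    (fun y : ℝ => ∑ n ∈ Finset.range N, u n * ((y ^ κ : ℝ) : ℂ) ^ n)
      =O[atTop] fun y => y ^ p * Real.exp y :=
  .fun_sum fun n _ => ((ofReal_rpow_pow_isBigO κ n).const_mul_left _).trans
    (rpow_isBigO_rpow_mul_exp _ _)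

theorem mittagLeffler_sub_isBigO_of_two_le_re (hκ : 0 < κ) (hc : 2 ≤ c.re) (p : ℝ) :
    (fun y : ℝ => mittagLeffler κ c (y ^ κ : ℝ) - (y : ℂ) ^ (1 - c) * cexp y / κ)
      =O[atTop] fun y => y ^ p * Real.exp y := by
  obtain ⟨σ, C, hσ₀, hσ₁, bound⟩ := exists_norm_integral_mittagLefflerKernel_sub_le hκ hc
  refine IsBigO.trans (.of_bound (C + ‖(κ : ℂ)⁻¹‖) ?_) (rpow_mul_exp_isBigO hσ₁ (1 - c.re) p)
  filter_upwards [eventually_gt_atTop 0] with y hy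
  set J := ∫ w, cexp (verticalLine 2 w * y) * mittagLefflerKernel κ c (verticalLine 2 w)
  have difference : mittagLeffler κ c (y ^ κ : ℝ) - (y : ℂ) ^ (1 - c) * cexp y / κ =
      (y : ℂ) ^ (1 - c) * ((J - (κ : ℂ)⁻¹ * (cexp y - 1)) - (κ : ℂ)⁻¹) := by
    rw [mittagLeffler, (hasSum_mittagLeffler_integral hκ hc hy).tsum_eq]
    ring
  have one_le_exp : 1 ≤ Real.exp (σ * y) := Real.one_le_exp (by positivity)
  rw [difference, norm_mul, norm_cpow_eq_rpow_re_of_pos hy, norm_mul,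
    Real.norm_of_nonneg (by positivity), Real.norm_of_nonneg (by positivity), mul_left_comm,
    sub_re, one_re]
  gcongr
  calc ‖J - (κ : ℂ)⁻¹ * (cexp y - 1) - (κ : ℂ)⁻¹‖
      ≤ ‖J - (κ : ℂ)⁻¹ * (cexp y - 1)‖ + ‖(κ : ℂ)⁻¹‖ := norm_sub_le _ _
    _ ≤ C * Real.exp (σ * y) + ‖(κ : ℂ)⁻¹‖ * Real.exp (σ * y) :=
        add_le_add (bound y hy) (le_mul_of_one_le_right (norm_nonneg _) one_le_exp)
    _ = (C + ‖(κ : ℂ)⁻¹‖) * Real.exp (σ * y) := by ring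

theorem mittagLeffler_sub_isBigO (hκ : 0 < κ) (c : ℂ) (p : ℝ) :
    (fun y : ℝ => mittagLeffler κ c (y ^ κ : ℝ) - (y : ℂ) ^ (1 - c) * cexp y / κ)
      =O[atTop] fun y => y ^ p * Real.exp y := by
  obtain ⟨N, hN⟩ := exists_nat_two_le_mul_add hκ c.re
  have head := sum_mul_ofReal_rpow_pow_isBigO κ p (fun n => (Gamma (κ * n + c))⁻¹) N
  have tail := (ofReal_rpow_pow_isBigO κ N).mul
    (mittagLeffler_sub_isBigO_of_two_le_re (c := κ * N + c) hκ (by simpa using hN) (p - κ * N))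
  refine (head.add (tail.congr' .rfl ?_)).congr' ?_ .rfl
  · filter_upwards [eventually_gt_atTop 0] with y hy
    rw [← mul_assoc, ← Real.rpow_add hy, add_sub_cancel]
  · filter_upwards [eventually_gt_atTop 0] with y hy
    have power : (y : ℂ) ^ (1 - c) =
        ((y ^ κ : ℝ) : ℂ) ^ N * (y : ℂ) ^ (1 - (κ * N + c)) := by
      rw [ofReal_rpow_pow hy.le, ← cpow_add _ _ (ofReal_ne_zero.2 hy.ne')]
      congr 1
      ring
    rw [mittagLeffler_eq_sum_add hκ c hy N, power]
    simp only [div_eq_inv_mul]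
    ring

theorem mittagLeffler_isBigO (hκ : 0 < κ) (c : ℂ) :
    (fun y : ℝ => mittagLeffler κ c (y ^ κ : ℝ))
      =O[atTop] fun y => y ^ (1 - c.re) * Real.exp y := by
  have leading : (fun y : ℝ => (y : ℂ) ^ (1 - c) * cexp y / κ)
      =O[atTop] fun y => y ^ (1 - c.re) * Real.exp y := by
    refine .of_bound ‖(κ : ℂ)⁻¹‖ ?_
    filter_upwards [eventually_gt_atTop 0] with y hy
    rw [div_eq_inv_mul, norm_mul, norm_mul, norm_cpow_eq_rpow_re_of_pos hy, norm_exp, ofReal_re,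
      Real.norm_of_nonneg (by positivity), sub_re, one_re]
  exact ((mittagLeffler_sub_isBigO hκ c (1 - c.re)).add leading).congr_left fun y => by ring

end

end MittagLeffler

/-! ### Power series with coefficients comparable to `1 / Γ(κn + c)` -/

/-- The Stirling factor `x ^ (x + a - 1/2) * e ^ (-x)`, which carries the growth of `Γ(x + a)`. -/
noncomputable def stirlingFactor (a : ℂ) (x : ℝ) : ℂ :=
  cexp ((x + a - 1 / 2) * (Real.log x : ℝ) - x)

theorem Gamma_eq_scaledGamma_mul (a : ℂ) (x : ℝ) :
    Gamma (x + a) = (√(2 * Real.pi) : ℝ) * scaledGamma a x * stirlingFactor a x := by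
  rw [scaledGamma, stirlingFactor, mul_div_cancel₀ _ ofReal_sqrt_two_pi_ne_zero, mul_assoc,
    ← Complex.exp_add]
  simp

theorem ofReal_cpow_eq_exp {x : ℝ} (hx : 0 < x) (s : ℂ) : (x : ℂ) ^ s = cexp (Real.log x * s) := by
  rw [cpow_def_of_ne_zero (ofReal_ne_zero.2 hx.ne'), ofReal_log hx.le]

theorem Gamma_isBigO_rpow_mul_norm_Gamma (a b : ℂ) :
    (fun x : ℝ => Gamma (x + a)) =O[atTop] fun x : ℝ => x ^ (a - b).re * ‖Gamma (x + b)‖ := by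
  have ratio : (fun x => scaledGamma a x * (scaledGamma b x)⁻¹) =O[atTop] fun _ => (1 : ℝ) :=
    ((scaledGamma_hasTwoTermExpansion a).mul (scaledGamma_hasTwoTermExpansion b).inv).isBigO_one
  have power : (fun x : ℝ => (x : ℂ) ^ (a - b)) =O[atTop] fun x : ℝ => x ^ (a - b).re := by
    refine .of_norm_eventuallyLE ?_
    filter_upwards [eventually_gt_atTop 0] with x hx
    rw [norm_cpow_eq_rpow_re_of_pos hx]
  have denominator := (isBigO_refl (fun x : ℝ => Gamma (x + b)) atTop).norm_right
  refine ((ratio.mul power).mul denominator).congr' ?_ (by simp)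
  filter_upwards [eventually_gt_atTop 0,
    (scaledGamma_hasTwoTermExpansion b).eventually_ne_zero] with x hx hb
  have factor_eq : stirlingFactor a x = (x : ℂ) ^ (a - b) * stirlingFactor b x := by
    rw [stirlingFactor, stirlingFactor, ofReal_cpow_eq_exp hx, ← Complex.exp_add]
    ring_nf
  rw [Gamma_eq_scaledGamma_mul a, Gamma_eq_scaledGamma_mul b, factor_eq]
  field_simp

theorem inv_sq_mul_inv_Gamma_isBigO (c : ℂ) :
    (fun x : ℝ => (x ^ 2)⁻¹ * ‖Gamma (x + c)‖⁻¹)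
      =O[atTop] fun x : ℝ => (Gamma (x + ((c.re + 2 : ℝ) : ℂ)))⁻¹ := by
  have growth := Gamma_isBigO_rpow_mul_norm_Gamma ((c.re + 2 : ℝ) : ℂ) c
  refine (growth.inv_rev ?_).congr_left fun x => ?_
  · filter_upwards [eventually_zero_lt_re_ofReal_add ((c.re + 2 : ℝ) : ℂ)] with x hx hzero
    exact absurd hzero (Gamma_ne_zero_of_re_pos hx)
  · simp [mul_comm]

section

variable {κ : ℝ}

theorem norm_mittagLeffler_ofReal (hκ : 0 < κ) {τ : ℝ} (hτ : 0 < τ) {y : ℝ} (hy : 0 < y) :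
    ‖mittagLeffler κ τ (y ^ κ : ℝ)‖ =
      ∑' n : ℕ, ‖((y ^ κ : ℝ) : ℂ) ^ n / Gamma (κ * n + τ)‖ := by
  have term (n : ℕ) : ((y ^ κ : ℝ) : ℂ) ^ n / Gamma (κ * n + τ) =
      ((y ^ κ) ^ n / Real.Gamma (κ * n + τ) : ℝ) := by
    push_cast [← Gamma_ofReal]
    rfl
  have nonneg (n : ℕ) : 0 ≤ (y ^ κ) ^ n / Real.Gamma (κ * n + τ) :=
    div_nonneg (by positivity) (Real.Gamma_pos_of_pos (by positivity)).le
  simp only [mittagLeffler, term, ← ofReal_tsum, norm_real, Real.norm_of_nonneg (nonneg _)]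
  exact Real.norm_of_nonneg (tsum_nonneg nonneg)

section Comparison

variable {ρ : ℕ → ℂ} {τ : ℝ}

theorem summable_mul_ofReal_rpow_pow (hκ : 0 < κ)
    (hρ : ρ =O[atTop] fun n : ℕ => (Gamma (κ * n + τ))⁻¹) {y : ℝ} (hy : 0 < y) :
    Summable fun n => ρ n * ((y ^ κ : ℝ) : ℂ) ^ n := by
  refine summable_of_isBigO_nat (summable_mittagLeffler hκ τ hy).norm ?_
  refine ((hρ.mul (isBigO_refl (fun n => ((y ^ κ : ℝ) : ℂ) ^ n) atTop)).norm_right).congr_right ?_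
  exact fun n => by rw [div_eq_inv_mul]

theorem norm_tsum_nat_add_mul_pow_le (hκ : 0 < κ) {N : ℕ} (hN : 0 < κ * N + τ) {C : ℝ}
    (hρ : ∀ n ≥ N, ‖ρ n‖ ≤ C * ‖(Gamma (κ * n + τ))⁻¹‖) {y : ℝ} (hy : 0 < y) :
    ‖∑' n, ρ (n + N) * ((y ^ κ : ℝ) : ℂ) ^ (n + N)‖ ≤
      C * ‖((y ^ κ : ℝ) : ℂ) ^ N * mittagLeffler κ (κ * N + τ) (y ^ κ : ℝ)‖ := by
  have summable := (summable_mittagLeffler hκ (κ * N + τ : ℝ) hy).norm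
  have norm_eq := norm_mittagLeffler_ofReal hκ hN hy
  push_cast at summable norm_eq
  rw [norm_mul, norm_eq, ← mul_assoc, ← tsum_mul_left]
  refine tsum_of_norm_bounded (summable.mul_left _).hasSum fun n => ?_
  calc ‖ρ (n + N) * ((y ^ κ : ℝ) : ℂ) ^ (n + N)‖
      ≤ C * ‖(Gamma (κ * (n + N : ℕ) + τ))⁻¹‖ * ‖((y ^ κ : ℝ) : ℂ) ^ (n + N)‖ := by
        rw [norm_mul]
        gcongr
        exact hρ _ (Nat.le_add_left _ _)
    _ = C * ‖((y ^ κ : ℝ) : ℂ) ^ N‖ *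
          ‖((y ^ κ : ℝ) : ℂ) ^ n / Gamma (κ * n + (κ * N + τ))‖ := by
        rw [mul_assoc, ← norm_mul, inv_mul_eq_div, mittagLeffler_term_add, norm_mul, mul_assoc]

theorem tsum_mul_ofReal_rpow_pow_isBigO (hκ : 0 < κ)
    (hρ : ρ =O[atTop] fun n : ℕ => (Gamma (κ * n + τ))⁻¹) :
    (fun y : ℝ => ∑' n, ρ n * ((y ^ κ : ℝ) : ℂ) ^ n)
      =O[atTop] fun y => y ^ (1 - τ) * Real.exp y := by
  obtain ⟨C, hC⟩ := hρ.bound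
  have index_pos : ∀ᶠ n : ℕ in atTop, 0 < κ * n + τ :=
    (tendsto_atTop_add_const_right _ τ
      (tendsto_natCast_atTop_atTop.const_mul_atTop hκ)).eventually_gt_atTop 0
  obtain ⟨N, hN⟩ := eventually_atTop.1 (hC.and index_pos)
  have tail_bound : (fun y : ℝ => ∑' n, ρ (n + N) * ((y ^ κ : ℝ) : ℂ) ^ (n + N)) =O[atTop]
      fun y => ((y ^ κ : ℝ) : ℂ) ^ N * mittagLeffler κ (κ * N + τ) (y ^ κ : ℝ) := by
    refine .of_bound C ?_
    filter_upwards [eventually_gt_atTop 0] with y hy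
    exact norm_tsum_nat_add_mul_pow_le hκ (hN N le_rfl).2 (fun n hn => (hN n hn).1) hy
  have tail := tail_bound.trans
    ((ofReal_rpow_pow_isBigO κ N).mul (mittagLeffler_isBigO hκ (κ * N + τ)))
  refine ((sum_mul_ofReal_rpow_pow_isBigO κ (1 - τ) ρ N).add (tail.congr' .rfl ?_)).congr' ?_ .rfl
  · filter_upwards [eventually_gt_atTop 0] with y hy
    have exponent : κ * N + (1 - ((κ : ℂ) * N + τ).re) = 1 - τ := by
      simp only [add_re, re_ofReal_mul, natCast_re, ofReal_re]
      ring
    rw [← mul_assoc, ← Real.rpow_add hy, exponent]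
  · filter_upwards [eventually_gt_atTop 0] with y hy
    exact (summable_mul_ofReal_rpow_pow hκ hρ hy).sum_add_tsum_nat_add N

end Comparison

theorem remainder_isBigO_inv_Gamma (hκ : 0 < κ) (c : ℂ) {d : ℂ} {R : ℝ → ℂ} {ρ : ℕ → ℂ}
    (hR : HasTwoTermExpansion R d) (hρ : ∀ᶠ n : ℕ in atTop, ρ n = R n / Gamma (κ * n + c)) :
    (fun n : ℕ => ρ n - (Gamma (κ * n + c))⁻¹ - κ * d * (Gamma (κ * n + (c + 1)))⁻¹)
      =O[atTop] fun n : ℕ => (Gamma (κ * n + (c.re + 2 : ℝ)))⁻¹ := by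
  have tendsto_index : Tendsto (fun x : ℝ => κ * x) atTop atTop := tendsto_id.const_mul_atTop hκ
  have numerator : (fun x : ℝ => R x - (1 + κ * d / (κ * x + c))) =O[atTop]
      fun x : ℝ => ((κ * x) ^ 2)⁻¹ :=
    (hR.sub_isBigO (.one_add_div_linear hκ.ne' c d)).trans <|
      (isBigO_const_mul_self (κ ^ 2) (fun x => ((κ * x) ^ 2)⁻¹) atTop).congr_left
        fun x => by field_simp
  have denominator := (isBigO_refl (fun x : ℝ => (Gamma (κ * x + c))⁻¹) atTop).norm_right
  have bound : (fun x : ℝ => ((κ * x) ^ 2)⁻¹ * ‖(Gamma (κ * x + c))⁻¹‖) =O[atTop]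
      fun x : ℝ => (Gamma (κ * x + (c.re + 2 : ℝ)))⁻¹ := by
    simpa [Function.comp_def] using (inv_sq_mul_inv_Gamma_isBigO c).comp_tendsto tendsto_index
  refine (((numerator.mul denominator).trans bound).comp_tendsto
    tendsto_natCast_atTop_atTop).congr' ?_ (by simp [Function.comp_def])
  filter_upwards [hρ, (tendsto_index.comp tendsto_natCast_atTop_atTop).eventually
    (eventually_zero_lt_re_ofReal_add c)] with n hn hpos
  have ne_zero : (κ : ℂ) * n + c ≠ 0 := fun h => by simp [h] at hpos
  simp only [Function.comp_apply, ofReal_natCast]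
  rw [hn, ← add_assoc, Gamma_add_one _ ne_zero, mul_inv]
  ring

theorem tsum_mul_ofReal_rpow_pow_eq (hκ : 0 < κ) (c q : ℂ) {ρ : ℕ → ℂ} {y : ℝ} (hy : 0 < y)
    (hr : Summable fun n : ℕ => (ρ n - (Gamma (κ * n + c))⁻¹ - q * (Gamma (κ * n + (c + 1)))⁻¹) *
      ((y ^ κ : ℝ) : ℂ) ^ n) :
    ∑' n, ρ n * ((y ^ κ : ℝ) : ℂ) ^ n =
      mittagLeffler κ c (y ^ κ : ℝ) + q * mittagLeffler κ (c + 1) (y ^ κ : ℝ) +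
        ∑' n : ℕ, (ρ n - (Gamma (κ * n + c))⁻¹ - q * (Gamma (κ * n + (c + 1)))⁻¹) *
          ((y ^ κ : ℝ) : ℂ) ^ n := by
  have series := summable_mittagLeffler hκ c hy
  have correction := (summable_mittagLeffler hκ (c + 1) hy).mul_left q
  rw [mittagLeffler, mittagLeffler, ← tsum_mul_left, ← series.tsum_add correction,
    ← (series.add correction).tsum_add hr]
  congr with n
  ring

theorem tsum_sub_two_terms_isBigO (hκ : 0 < κ) (c : ℂ) {d : ℂ} {R : ℝ → ℂ} {ρ : ℕ → ℂ}
    (hR : HasTwoTermExpansion R d) (hρ : ∀ᶠ n : ℕ in atTop, ρ n = R n / Gamma (κ * n + c)) :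
    (fun y : ℝ => ∑' n, ρ n * ((y ^ κ : ℝ) : ℂ) ^ n -
        (y : ℂ) ^ (1 - c) * cexp y / κ * (1 + κ * d / y))
      =O[atTop] fun y => y ^ (-1 - c.re) * Real.exp y := by
  have hr := remainder_isBigO_inv_Gamma hκ c hR hρ
  have remainder := tsum_mul_ofReal_rpow_pow_isBigO hκ hr
  rw [show 1 - (c.re + 2) = -1 - c.re by ring] at remainder
  have leading := mittagLeffler_sub_isBigO hκ c (-1 - c.re)
  have correction := (mittagLeffler_sub_isBigO hκ (c + 1) (-1 - c.re)).const_mul_left (κ * d)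
  refine ((leading.add correction).add remainder).congr' ?_ .rfl
  filter_upwards [eventually_gt_atTop 0] with y hy
  have hy' : (y : ℂ) ≠ 0 := ofReal_ne_zero.2 hy.ne'
  have cpow_pred : (y : ℂ) ^ (1 - (c + 1)) = (y : ℂ) ^ (1 - c) / y := by
    rw [← sub_sub, cpow_sub _ _ hy', cpow_one]
  rw [tsum_mul_ofReal_rpow_pow_eq hκ c (κ * d) hy (summable_mul_ofReal_rpow_pow hκ hr hy),
    cpow_pred]
  ring

theorem hasTwoTermExpansion_tsum_div (hκ : 0 < κ) (c : ℂ) {d : ℂ} {R : ℝ → ℂ} {ρ : ℕ → ℂ}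
    (hR : HasTwoTermExpansion R d) (hρ : ∀ᶠ n : ℕ in atTop, ρ n = R n / Gamma (κ * n + c)) :
    HasTwoTermExpansion (fun y => (∑' n, ρ n * ((y ^ κ : ℝ) : ℂ) ^ n) /
      ((y : ℂ) ^ (1 - c) * cexp y / κ)) (κ * d) := by
  have inv_leading : (fun y : ℝ => ((y : ℂ) ^ (1 - c) * cexp y / κ)⁻¹) =O[atTop]
      fun y => (y ^ (1 - c.re) * Real.exp y)⁻¹ := by
    refine .of_bound κ ?_
    filter_upwards [eventually_gt_atTop 0] with y hy
    rw [norm_inv, norm_div, norm_mul, norm_cpow_eq_rpow_re_of_pos hy, norm_exp, ofReal_re,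
      norm_real, Real.norm_of_nonneg hκ.le, Real.norm_of_nonneg (by positivity), inv_div,
      div_eq_mul_inv, sub_re, one_re]
  refine ((tsum_sub_two_terms_isBigO hκ c hR hρ).mul inv_leading).congr' ?_ ?_
  · filter_upwards [eventually_gt_atTop 0] with y hy
    have leading_ne : (y : ℂ) ^ (1 - c) * cexp y / κ ≠ 0 := by
      simp [cpow_eq_zero_iff, hy.ne', hκ.ne']
    rw [sub_mul, ← div_eq_mul_inv, mul_right_comm, mul_inv_cancel₀ leading_ne, one_mul]
  · filter_upwards [eventually_gt_atTop 0] with y hy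
    rw [mul_inv, mul_mul_mul_comm, mul_inv_cancel₀ (Real.exp_ne_zero y), mul_one,
      ← Real.rpow_neg hy.le, ← Real.rpow_add hy, ← Real.rpow_natCast, ← Real.rpow_neg hy.le]
    congr 1
    push_cast
    ring

end

/-! ### Coefficients of the Wright function -/

/-- The ratio of the geometric factor by which the coefficients of the Wright function differ from
those of `E_{κ,c}`; it equals `h κ ^ κ` when `κ = 1 + β - α`. -/
noncomputable def wrightRatio (α β κ : ℝ) : ℝ := α ^ α * β ^ (-β) * κ ^ κ

/-- The constant factor by which the coefficients of the Wright function differ from those of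
`E_{κ,c}`; it equals `κ A` when `κ = 1 + β - α` and `c = 1 - ϑ`. -/
noncomputable def wrightConst (α β κ : ℝ) (a b c : ℂ) : ℂ :=
  (α : ℂ) ^ (a - 1 / 2) * (β : ℂ) ^ (1 / 2 - b) * (κ : ℂ) ^ (c - 1 / 2)

/-- The quotient of scaled Gamma functions by which the coefficients of the Wright function differ
from those of `E_{κ,c}`, apart from the constant and geometric factors. -/
noncomputable def scaledGammaRatio (α β κ : ℝ) (a b c : ℂ) (x : ℝ) : ℂ :=
  scaledGamma a (α * x) * scaledGamma c (κ * x) *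
    (scaledGamma b (β * x) * scaledGamma 1 x)⁻¹

section

variable {α β κ : ℝ}

theorem scaledGammaRatio_hasTwoTermExpansion (hα : 0 < α) (hβ : 0 < β) (hκ : 0 < κ) (a b c : ℂ) :
    HasTwoTermExpansion (scaledGammaRatio α β κ a b c)
      (stirlingCoeff a / α + stirlingCoeff c / κ + -(stirlingCoeff b / β + stirlingCoeff 1)) :=
  (((scaledGamma_hasTwoTermExpansion a).comp_const_mul hα).mul
    ((scaledGamma_hasTwoTermExpansion c).comp_const_mul hκ)).mul
    (((scaledGamma_hasTwoTermExpansion b).comp_const_mul hβ).mul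
      (scaledGamma_hasTwoTermExpansion 1)).inv

theorem wrightRatio_pow_eq_exp (hα : 0 < α) (hβ : 0 < β) (hκ : 0 < κ) (n : ℕ) :
    (wrightRatio α β κ : ℂ) ^ n =
      cexp (n * (α * Real.log α - β * Real.log β + κ * Real.log κ : ℝ)) := by
  rw [Complex.exp_nat_mul, ← ofReal_exp, wrightRatio, Real.rpow_def_of_pos hα,
    Real.rpow_def_of_pos hβ, Real.rpow_def_of_pos hκ, ← Real.exp_add, ← Real.exp_add]
  ring_nf

theorem wrightRatio_pos (hα : 0 < α) (hβ : 0 < β) (hκ : 0 < κ) : 0 < wrightRatio α β κ := by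
  rw [wrightRatio]
  positivity

theorem wrightConst_ne_zero (hα : 0 < α) (hβ : 0 < β) (hκ : 0 < κ) (a b c : ℂ) :
    wrightConst α β κ a b c ≠ 0 := by
  simp [wrightConst, cpow_eq_zero_iff, hα.ne', hβ.ne', hκ.ne']

theorem stirlingFactor_mul_stirlingFactor (hα : 0 < α) (hβ : 0 < β) (hκ : 0 < κ)
    (κ_eq : κ = 1 + β - α) {a b c : ℂ} (c_eq : c = 1 - (a - b)) {n : ℕ} (hn : 0 < n) :
    stirlingFactor a (α * n) * stirlingFactor c (κ * n) =
      wrightConst α β κ a b c * (wrightRatio α β κ : ℂ) ^ n *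
        (stirlingFactor b (β * n) * stirlingFactor 1 n) := by
  have hn' : (n : ℝ) ≠ 0 := by positivity
  have κ_eq' : (κ : ℂ) = 1 + β - α := by
    rw [κ_eq]
    push_cast
    ring
  rw [wrightRatio_pow_eq_exp hα hβ hκ, wrightConst]
  simp only [stirlingFactor, ofReal_cpow_eq_exp, hα, hβ, hκ, ← Complex.exp_add]
  rw [Real.log_mul hα.ne' hn', Real.log_mul hβ.ne' hn', Real.log_mul hκ.ne' hn', c_eq]
  congr 1
  push_cast
  linear_combination (n * Complex.log n - n) * κ_eq'

theorem Gamma_mul_Gamma_eq (hα : 0 < α) (hβ : 0 < β) (hκ : 0 < κ)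
    (κ_eq : κ = 1 + β - α) {a b c : ℂ} (c_eq : c = 1 - (a - b)) {n : ℕ} (hn : 0 < n)
    (hb : scaledGamma b (β * n) ≠ 0) (hone : scaledGamma 1 n ≠ 0) :
    Gamma (α * n + a) * Gamma (κ * n + c) =
      wrightConst α β κ a b c * (wrightRatio α β κ : ℂ) ^ n * scaledGammaRatio α β κ a b c n *
        (Gamma (β * n + b) * n.factorial) := by
  have scaled (r : ℝ) (s : ℂ) : Gamma (r * n + s) = (√(2 * Real.pi) : ℝ) *
      scaledGamma s (r * n) * stirlingFactor s (r * n) := by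
    rw [← Gamma_eq_scaledGamma_mul, ofReal_mul, ofReal_natCast]
  have factorial_eq : (n.factorial : ℂ) =
      (√(2 * Real.pi) : ℝ) * scaledGamma 1 n * stirlingFactor 1 n := by
    rw [← Gamma_eq_scaledGamma_mul, ofReal_natCast, Gamma_nat_eq_factorial]
  have growth := stirlingFactor_mul_stirlingFactor hα hβ hκ κ_eq c_eq hn
  have ratio_mul : scaledGammaRatio α β κ a b c n * (scaledGamma b (β * n) * scaledGamma 1 n) =
      scaledGamma a (α * n) * scaledGamma c (κ * n) :=
    inv_mul_cancel_right₀ (mul_ne_zero hb hone) _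
  rw [scaled, scaled, scaled, factorial_eq]
  linear_combination ((√(2 * Real.pi) : ℝ) : ℂ) ^ 2 *
    (scaledGamma a (α * n) * scaledGamma c (κ * n) * growth -
      wrightConst α β κ a b c * (wrightRatio α β κ : ℂ) ^ n *
        (stirlingFactor b (β * n) * stirlingFactor 1 n) * ratio_mul)

theorem eventually_wright_coeff_eq (hα : 0 < α) (hβ : 0 < β) (hκ : 0 < κ)
    (κ_eq : κ = 1 + β - α) {a b c : ℂ} (c_eq : c = 1 - (a - b)) :
    ∀ᶠ n : ℕ in atTop, Gamma (α * n + a) / Gamma (β * n + b) / n.factorial /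
        (wrightConst α β κ a b c * (wrightRatio α β κ : ℂ) ^ n) =
      scaledGammaRatio α β κ a b c n / Gamma (κ * n + c) := by
  have tendsto_index {r : ℝ} (hr : 0 < r) : Tendsto (fun n : ℕ => r * (n : ℝ)) atTop atTop :=
    tendsto_natCast_atTop_atTop.const_mul_atTop hr
  have Gamma_ne_zero {r : ℝ} (hr : 0 < r) (s : ℂ) :
      ∀ᶠ n : ℕ in atTop, Gamma (r * n + s) ≠ 0 := by
    filter_upwards [(tendsto_index hr).eventually (eventually_zero_lt_re_ofReal_add s)] with n hn
    exact Gamma_ne_zero_of_re_pos (by simpa using hn)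
  filter_upwards [eventually_gt_atTop 0, Gamma_ne_zero hβ b, Gamma_ne_zero hκ c,
    (tendsto_index hβ).eventually (scaledGamma_hasTwoTermExpansion b).eventually_ne_zero,
    tendsto_natCast_atTop_atTop.eventually
      (scaledGamma_hasTwoTermExpansion 1).eventually_ne_zero] with n hn hΓb hΓc hb hone
  have prefactor_ne : wrightConst α β κ a b c * (wrightRatio α β κ : ℂ) ^ n ≠ 0 :=
    mul_ne_zero (wrightConst_ne_zero hα hβ hκ a b c)
      (pow_ne_zero n (ofReal_ne_zero.2 (wrightRatio_pos hα hβ hκ).ne'))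
  have factorial_ne : (n.factorial : ℂ) ≠ 0 := Nat.cast_ne_zero.2 n.factorial_ne_zero
  rw [div_div, div_div,
    div_eq_div_iff (mul_ne_zero hΓb (mul_ne_zero factorial_ne prefactor_ne)) hΓc,
    Gamma_mul_Gamma_eq hα hβ hκ κ_eq c_eq hn hb hone]
  ring

theorem wright_hasTwoTermExpansion (hα : 0 < α) (hβ : 0 < β) (hκ : 0 < κ)
    (κ_eq : κ = 1 + β - α) {a b c : ℂ} (c_eq : c = 1 - (a - b)) :
    HasTwoTermExpansion (fun y => wright α β a b (y ^ κ / wrightRatio α β κ : ℝ) /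
      (wrightConst α β κ a b c / κ * (y : ℂ) ^ (a - b) * cexp y))
      (κ * (stirlingCoeff a / α + stirlingCoeff c / κ +
        -(stirlingCoeff b / β + stirlingCoeff 1))) := by
  have expansion := hasTwoTermExpansion_tsum_div hκ c
    (scaledGammaRatio_hasTwoTermExpansion hα hβ hκ a b c)
    (eventually_wright_coeff_eq hα hβ hκ κ_eq c_eq)
  refine expansion.congr' (.of_forall fun y => ?_)
  have const_ne := wrightConst_ne_zero hα hβ hκ a b c
  have wright_eq : wright α β a b (y ^ κ / wrightRatio α β κ : ℝ) =
      wrightConst α β κ a b c * ∑' n : ℕ, Gamma (α * n + a) / Gamma (β * n + b) / n.factorial /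
        (wrightConst α β κ a b c * (wrightRatio α β κ : ℂ) ^ n) * ((y ^ κ : ℝ) : ℂ) ^ n := by
    rw [wright, ← tsum_mul_left]
    congr with n
    rw [ofReal_div, div_pow]
    field_simp
  have leading_eq : wrightConst α β κ a b c / κ * (y : ℂ) ^ (a - b) * cexp y =
      wrightConst α β κ a b c * ((y : ℂ) ^ (1 - c) * cexp y / κ) := by
    rw [show 1 - c = a - b by rw [c_eq]; ring]
    ring
  simp only [wright_eq, leading_eq, mul_div_mul_left _ _ const_ne]

theorem wrightConst_div (hκ : κ ≠ 0) (a b ϑ : ℂ) :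
    wrightConst α β κ a b (1 - ϑ) / κ =
      (κ : ℂ) ^ (-ϑ - 1 / 2) * (α : ℂ) ^ (a - 1 / 2) * (β : ℂ) ^ (1 / 2 - b) := by
  have hκ' : (κ : ℂ) ≠ 0 := ofReal_ne_zero.2 hκ
  rw [wrightConst, show 1 - ϑ - 1 / 2 = -ϑ - 1 / 2 + 1 by ring, cpow_add _ _ hκ', cpow_one]
  field_simp

theorem first_correction_eq (hα : α ≠ 0) (hβ : β ≠ 0) (hκ : κ ≠ 0) (κ_eq : κ = 1 + β - α)
    (a b : ℂ) :
    κ * (stirlingCoeff a / α + stirlingCoeff (1 - (a - b)) / κ +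
        -(stirlingCoeff b / β + stirlingCoeff 1)) =
      (1 / (12 * (α : ℂ) * β)) * (α * (α - 1) * (1 - 6 * b + 6 * b ^ 2) +
        β * (β + 1) * (1 - 6 * a + 6 * a ^ 2) +
        α * β * (α - β - 2 * (1 + 6 * a * b - 6 * b))) := by
  have hα' : (α : ℂ) ≠ 0 := ofReal_ne_zero.2 hα
  have hβ' : (β : ℂ) ≠ 0 := ofReal_ne_zero.2 hβ
  have hκ' : (κ : ℂ) ≠ 0 := ofReal_ne_zero.2 hκ
  have β_eq : (β : ℂ) = κ + α - 1 := by
    rw [κ_eq]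
    push_cast
    ring
  rw [mul_add, mul_add, mul_div_cancel₀ _ hκ']
  simp only [stirlingCoeff]
  field_simp
  rw [β_eq]
  ring

end

/-- Two-term exponential asymptotic expansion of the Wright function on the positive real
axis: `₁Ψ₁((α,a);(β,b) | x) = A Z^ϑ e^Z (1 + c₁/Z + O(Z^{−2}))` as `x → +∞`, where
`κ = 1 + β − α`, `h = α^α β^{−β}`, `ϑ = a − b`, `A = κ^{−ϑ−1/2} α^{a−1/2} β^{1/2−b}`,
`Z = κ (hx)^{1/κ}` and `c₁` is the first correction coefficient. -/
theorem wright_two_term_asymptotics (α β : ℝ) (hα : 0 < α) (hβ : 0 < β)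
    (hκ : 0 < 1 + β - α) (a b : ℂ)
    (hpole : ∀ n m : ℕ, (α : ℂ) * (n : ℂ) + a ≠ -(m : ℂ))
    (h : ℝ) (hh : h = α ^ α * β ^ (-β))
    (ϑ : ℂ) (hϑ : ϑ = a - b)
    (A : ℂ) (hA : A = ((1 + β - α : ℝ) : ℂ) ^ (-ϑ - 1 / 2) *
      ((α : ℝ) : ℂ) ^ (a - 1 / 2) * ((β : ℝ) : ℂ) ^ (1 / 2 - b))
    (Z : ℝ → ℝ) (hZ : ∀ x : ℝ, Z x = (1 + β - α) * (h * x) ^ (1 / (1 + β - α)))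
    (c₁ : ℂ) (hc₁ : c₁ = (1 / (12 * (α : ℂ) * (β : ℂ))) *
      ((α : ℂ) * ((α : ℂ) - 1) * (1 - 6 * b + 6 * b ^ 2) +
        (β : ℂ) * ((β : ℂ) + 1) * (1 - 6 * a + 6 * a ^ 2) +
        (α : ℂ) * (β : ℂ) * ((α : ℂ) - (β : ℂ) - 2 * (1 + 6 * a * b - 6 * b)))) :
    (fun x : ℝ =>
        wright α β a b (x : ℂ) / (A * ((Z x : ℝ) : ℂ) ^ ϑ * Complex.exp ((Z x : ℝ) : ℂ)) -
          (1 + c₁ / ((Z x : ℝ) : ℂ)))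
      =O[atTop] fun x : ℝ => (Z x) ^ (-2 : ℝ) := by
  obtain ⟨κ, κ_eq⟩ : ∃ κ, κ = 1 + β - α := ⟨_, rfl⟩
  simp only [← κ_eq] at hκ hA hZ
  have hh₀ : 0 < h := by rw [hh]; positivity
  have Z_tendsto : Tendsto Z atTop atTop := by
    simp only [funext hZ]
    exact ((tendsto_rpow_atTop (by positivity)).comp
      (tendsto_id.const_mul_atTop hh₀)).const_mul_atTop hκ
  have Z_rpow {x : ℝ} (hx : 0 < x) : Z x ^ κ / wrightRatio α β κ = x := by
    rw [hZ, Real.mul_rpow hκ.le (by positivity), ← Real.rpow_mul (by positivity),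
      one_div_mul_cancel hκ.ne', Real.rpow_one, wrightRatio, ← hh]
    field_simp
  have expansion := wright_hasTwoTermExpansion hα hβ hκ κ_eq (a := a) (b := b) rfl
  rw [first_correction_eq hα.ne' hβ.ne' hκ.ne' κ_eq, ← hc₁, ← hϑ, wrightConst_div hκ.ne', ← hA]
    at expansion
  refine (IsBigO.comp_tendsto expansion Z_tendsto).congr' ?_ ?_
  · filter_upwards [eventually_gt_atTop 0] with x hx
    rw [Function.comp_apply, Z_rpow hx]
  · filter_upwards [Z_tendsto.eventually_ge_atTop 0] with x hx
    rw [Function.comp_apply, Real.rpow_neg hx, Real.rpow_two]
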